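/- There exists a constant c > 0 independent of the mesh size h and the spline degree p such that for every tensor product spline u ∈ S^2 = S ⊗ S on Ω = (0,1)^2: c^{-1}|u|_{H^1(Ω)}^2 ≤ Σ_{α∈{0,1}^2} |Q_α u|_{H^1(Ω)}^2 ≤ c |u|_{H^1(Ω)}^2, and the analogous two-sided bound holds for the full H^1(Ω)-norm. That is, the L2-orthogonal splitting S^2 = S_{00} ⊕ S_{01} ⊕ S_{10} ⊕ S_{11} is H^1-stable uniformly in h and p. -/

import Mathlib

noncomputable section

open MeasureTheory Set

namespace SplineMG

/-- The `j`-th piece of the uniform partition of `[0,1]` into `m` subintervals of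
length `h = 1/m`; the first and last pieces are extended to `-∞` resp. `+∞`
(the spline is extended polynomially outside `[0,1]`). -/
def pieceSet (m j : ℕ) : Set ℝ :=
  (if j = 0 then Iic ((1 : ℝ) / m) else Icc ((j : ℝ) / m) (((j : ℝ) + 1) / m)) ∪
  (if j = m - 1 then Ici (((m : ℝ) - 1) / m) else ∅)

/-- `u : ℝ → ℝ` belongs to the univariate spline space `S` of degree `p` and maximal
smoothness `C^{p-1}` on the uniform partition of `(0,1)` into `m` intervals of
length `h = 1/m`. -/
def IsSpline (m p : ℕ) (u : ℝ → ℝ) : Prop :=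
  ContDiffOn ℝ (p - 1 : ℕ) u (Ioo (0 : ℝ) 1) ∧
  ∀ j < m, ∃ q : Polynomial ℝ, q.natDegree ≤ p ∧ ∀ x ∈ pieceSet m j, u x = q.eval x

/-- `u` belongs to the subspace `S₀` of `S`: all odd derivatives of order `< p`
vanish at both endpoints. -/
def IsSpline0 (m p : ℕ) (u : ℝ → ℝ) : Prop :=
  IsSpline m p u ∧
  ∀ l : ℕ, 2 * l + 1 < p →
    iteratedDeriv (2 * l + 1) u 0 = 0 ∧ iteratedDeriv (2 * l + 1) u 1 = 0

/-- The `L²(0,1)` inner product. -/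
def ip0 (u v : ℝ → ℝ) : ℝ := ∫ x in Ioo (0 : ℝ) 1, u x * v x

/-- The squared `L²(0,1)` norm `‖u‖₀²`. -/
def l2normSq (u : ℝ → ℝ) : ℝ := ∫ x in Ioo (0 : ℝ) 1, u x ^ 2

/-- The `L²(0,1)` norm `‖u‖₀`. -/
def l2norm (u : ℝ → ℝ) : ℝ := Real.sqrt (l2normSq u)

/-- The squared `H¹(0,1)` seminorm `|u|₁²`. -/
def h1semiSq (u : ℝ → ℝ) : ℝ := ∫ x in Ioo (0 : ℝ) 1, deriv u x ^ 2

/-- The `H¹(0,1)` seminorm `|u|₁`. -/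
def h1semi (u : ℝ → ℝ) : ℝ := Real.sqrt (h1semiSq u)

/-- The squared full `H¹(0,1)` norm. -/
def h1normSq (u : ℝ → ℝ) : ℝ := l2normSq u + h1semiSq u

/-- `u` belongs to `S₁`, the `L²(0,1)`-orthogonal complement of `S₀` in `S`. -/
def IsSpline1 (m p : ℕ) (u : ℝ → ℝ) : Prop :=
  IsSpline m p u ∧ ∀ v, IsSpline0 m p v → ip0 u v = 0

/-- `v = Q₀ u` is the `L²(0,1)`-orthogonal projection of `u` onto `S₀`. -/
def IsL2Proj0 (m p : ℕ) (u v : ℝ → ℝ) : Prop :=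
  IsSpline0 m p v ∧ ∀ w, IsSpline0 m p w → ip0 (u - v) w = 0

/-- The component predicate: `false ↦ S₀`, `true ↦ S₁`. -/
def IsSplineC (m p : ℕ) : Bool → (ℝ → ℝ) → Prop
  | false => IsSpline0 m p
  | true => IsSpline1 m p

/-- The tensor-product spline space `S^d = S ⊗ ⋯ ⊗ S` on `(0,1)^d`. -/
def TensorSpline (d m p : ℕ) : Submodule ℝ ((Fin d → ℝ) → ℝ) :=
  Submodule.span ℝ {u | ∃ f : Fin d → ℝ → ℝ, (∀ i, IsSpline m p (f i)) ∧
    u = fun x => ∏ i, f i (x i)}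

/-- The subspace `S_α = S_{α₁} ⊗ ⋯ ⊗ S_{α_d}` of `S^d`, for `α ∈ {0,1}^d`
(`false ↦ 0`, `true ↦ 1`). -/
def TensorSplineSub (d m p : ℕ) (α : Fin d → Bool) : Submodule ℝ ((Fin d → ℝ) → ℝ) :=
  Submodule.span ℝ {u | ∃ f : Fin d → ℝ → ℝ, (∀ i, IsSplineC m p (α i) (f i)) ∧
    u = fun x => ∏ i, f i (x i)}

/-- The open unit cube `Ω = (0,1)^d`. -/
def cube (d : ℕ) : Set (Fin d → ℝ) := Set.univ.pi fun _ => Ioo (0 : ℝ) 1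

/-- The `i`-th partial derivative. -/
def pd (d : ℕ) (i : Fin d) (u : (Fin d → ℝ) → ℝ) : (Fin d → ℝ) → ℝ :=
  fun x => deriv (fun t => u (Function.update x i t)) (x i)

/-- The `L²(Ω)` inner product on the unit cube. -/
def ipd (d : ℕ) (u v : (Fin d → ℝ) → ℝ) : ℝ := ∫ x in cube d, u x * v x

/-- The squared `L²(Ω)` norm. -/
def l2normSqD (d : ℕ) (u : (Fin d → ℝ) → ℝ) : ℝ := ∫ x in cube d, u x ^ 2

/-- The bilinear form `a(u,v) = ∫_Ω (∇u·∇v + uv) dx`. -/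
def aForm (d : ℕ) (u v : (Fin d → ℝ) → ℝ) : ℝ :=
  ∫ x in cube d, (∑ i, pd d i u x * pd d i v x) + u x * v x

/-- The squared `H¹(Ω)` seminorm. -/
def h1semiSqD (d : ℕ) (u : (Fin d → ℝ) → ℝ) : ℝ :=
  ∫ x in cube d, ∑ i, pd d i u x ^ 2

/-- The squared full `H¹(Ω)` norm. -/
def h1normSqD (d : ℕ) (u : (Fin d → ℝ) → ℝ) : ℝ := l2normSqD d u + h1semiSqD d u

/-- `v = Q_α u` is the `L²(Ω)`-orthogonal projection of `u` onto `S_α`. -/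
def IsL2ProjSub (d m p : ℕ) (α : Fin d → Bool) (u v : (Fin d → ℝ) → ℝ) : Prop :=
  v ∈ TensorSplineSub d m p α ∧ ∀ w ∈ TensorSplineSub d m p α, ipd d (u - v) w = 0

/-- The coarse tensor-product spline space `(S_c)^d` (with `m/2` knot spans of
width `2h` per direction). -/
def TensorSplineCoarse (d m p : ℕ) : Submodule ℝ ((Fin d → ℝ) → ℝ) :=
  TensorSpline d (m / 2) p

/-- `v = T_c u` is the `a(·,·)`-orthogonal (Galerkin) projection of `u` onto `(S_c)^d`. -/
def IsGalerkinCoarseProj (d m p : ℕ) (u v : (Fin d → ℝ) → ℝ) : Prop :=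
  v ∈ TensorSplineCoarse d m p ∧ ∀ w ∈ TensorSplineCoarse d m p, aForm d (u - v) w = 0

end SplineMG

namespace SplineMG

/-!
In one variable the `L²`-projector `Q₀` onto `S₀` is `H¹`-stable, uniformly in `h` and `p`: compare
`Q₀ f` with an `H¹`-stable approximant of `f` in `S₀` whose `L²`-error is at most a multiple of
`h |f|₁` (integrate the `L²`-projection of `f'` and apply Aubin–Nitsche duality), and bound the
difference, which lies in `S₀`, by the inverse inequality `|w|₁ ≤ C h⁻¹ ‖w‖`. That inequality holds
on `S₀`, but not on `S`, with a constant independent of `p`. Hence `Q₁ = I - Q₀` is stable as well.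

On tensor sums, squared `L²`-norms are quadratic forms of entrywise products of univariate Gram
matrices, so by the Schur product theorem one-dimensional operator bounds multiply; this gives the
upper bound in every dimension. The lower bound is Cauchy–Schwarz for `u = ∑_α Q_α u`.
-/

open Polynomial

section Preliminaries

theorem polynomial_derivative_surjective :
    Function.Surjective (derivative : ℝ[X] → ℝ[X]) := by
  intro q
  induction q using Polynomial.induction_on' with
  | add p q hp hq =>
    obtain ⟨P, rfl⟩ := hp
    obtain ⟨Q, rfl⟩ := hq
    exact ⟨P + Q, derivative_add⟩
  | monomial k a =>
    have hk : (k : ℝ) + 1 ≠ 0 := by positivity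
    exact ⟨monomial (k + 1) (a / (k + 1)), by simp [hk]⟩

theorem iteratedDeriv_polynomial_eval (q : ℝ[X]) (i : ℕ) :
    iteratedDeriv i (fun x => q.eval x) = fun x => (derivative^[i] q).eval x := by
  induction i generalizing q with
  | zero => simp
  | succ i ih =>
    have hderiv : deriv (fun x => q.eval x) = fun x => (derivative q).eval x :=
      funext fun x => q.deriv
    rw [iteratedDeriv_succ', hderiv, ih, Function.iterate_succ_apply]

theorem contDiff_polynomial_eval (q : ℝ[X]) (k : WithTop ℕ∞) :
    ContDiff ℝ k fun x => q.eval x := by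
  simpa [coe_aeval_eq_eval] using q.contDiff_aeval (𝕜 := ℝ) k

theorem integral_derivative_eval (q : ℝ[X]) (a b : ℝ) :
    ∫ t in a..b, (derivative q).eval t = q.eval b - q.eval a :=
  intervalIntegral.integral_eq_sub_of_hasDerivAt (fun x _ => q.hasDerivAt x)
    ((derivative q).continuous.intervalIntegrable a b)

theorem intervalIntegrable_eval_mul_eval (q r : ℝ[X]) (a b : ℝ) :
    IntervalIntegrable (fun t => q.eval t * r.eval t) volume a b :=
  (q.continuous.mul r.continuous).intervalIntegrable a b

theorem eq_zero_of_integral_eval_mul_self_eq_zero {q : ℝ[X]} {a b : ℝ} (hab : a < b)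
    (h : ∫ t in a..b, q.eval t * q.eval t = 0) : q = 0 := by
  refine q.eq_zero_of_infinite_isRoot ((Ioo_infinite hab).mono fun c hc => ?_)
  by_contra hqc
  refine (intervalIntegral.integral_pos hab (f := fun t => q.eval t * q.eval t)
    (q.continuous.mul q.continuous).continuousOn (fun x _ => mul_self_nonneg _)
    ⟨c, Ioo_subset_Icc_self hc, mul_self_pos.mpr hqc⟩).ne' h

theorem sq_integral_le_mul_integral_mul_self {f : ℝ → ℝ} (hf : Continuous f) {a b : ℝ}
    (hab : a ≤ b) : (∫ t in a..b, f t) ^ 2 ≤ (b - a) * ∫ t in a..b, f t * f t := by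
  rcases hab.eq_or_lt with rfl | hlt
  · simp
  set I := ∫ t in a..b, f t
  have hexpand : ∫ t in a..b, ((b - a) * f t - I) ^ 2 =
      (b - a) * ((b - a) * (∫ t in a..b, f t * f t) - I ^ 2) := by
    have hsq : ∀ t, ((b - a) * f t - I) ^ 2 =
        (b - a) ^ 2 * (f t * f t) - (2 * (b - a) * I) * f t + I ^ 2 := fun t => by ring
    simp_rw [hsq]
    rw [intervalIntegral.integral_add, intervalIntegral.integral_sub,
      intervalIntegral.integral_const_mul, intervalIntegral.integral_const_mul,
      intervalIntegral.integral_const, smul_eq_mul]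
    · ring
    all_goals exact Continuous.intervalIntegrable (by fun_prop) _ _
  have hnonneg : 0 ≤ ∫ t in a..b, ((b - a) * f t - I) ^ 2 :=
    intervalIntegral.integral_nonneg hab fun t _ => sq_nonneg _
  rw [hexpand] at hnonneg
  linarith [(mul_nonneg_iff_of_pos_left (sub_pos.mpr hlt)).mp hnonneg]

theorem integral_sub_left_mul_self_le (q : ℝ[X]) {a b : ℝ} (hab : a ≤ b) :
    ∫ t in a..b, (q.eval t - q.eval a) * (q.eval t - q.eval a) ≤
      (b - a) ^ 2 * ∫ t in a..b, (derivative q).eval t * (derivative q).eval t := by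
  set I := ∫ t in a..b, (derivative q).eval t * (derivative q).eval t
  have hpointwise : ∀ t ∈ Icc a b,
      (q.eval t - q.eval a) * (q.eval t - q.eval a) ≤ (b - a) * I := by
    intro t ht
    calc (q.eval t - q.eval a) * (q.eval t - q.eval a)
        = (∫ s in a..t, (derivative q).eval s) ^ 2 := by rw [integral_derivative_eval, sq]
      _ ≤ (t - a) * ∫ s in a..t, (derivative q).eval s * (derivative q).eval s :=
          sq_integral_le_mul_integral_mul_self (derivative q).continuous ht.1
      _ ≤ (b - a) * I := by
          gcongr
          · exact intervalIntegral.integral_nonneg ht.1 fun _ _ => mul_self_nonneg _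
          · exact ht.2
          · exact intervalIntegral.integral_mono_interval le_rfl ht.1 ht.2
              (.of_forall fun _ => mul_self_nonneg _)
              (intervalIntegrable_eval_mul_eval _ _ _ _)
  calc ∫ t in a..b, (q.eval t - q.eval a) * (q.eval t - q.eval a)
      ≤ ∫ _ in a..b, (b - a) * I :=
        intervalIntegral.integral_mono_on hab
          (Continuous.intervalIntegrable (by fun_prop) _ _) (by simp) hpointwise
    _ = (b - a) ^ 2 * I := by
        rw [intervalIntegral.integral_const, smul_eq_mul]
        ring

theorem integral_affine_mul_self (k l a b : ℝ) :
    ∫ t in a..b, (C k * X + C l : ℝ[X]).eval t * (C k * X + C l : ℝ[X]).eval t =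
      (b - a) * (k * ((a + b) / 2) + l) ^ 2 + k ^ 2 * (b - a) ^ 3 / 12 := by
  have hderiv : ∀ t, HasDerivAt (fun t => k ^ 2 * t ^ 3 / 3 + k * l * t ^ 2 + l ^ 2 * t)
      ((C k * X + C l : ℝ[X]).eval t * (C k * X + C l : ℝ[X]).eval t) t := by
    intro t
    refine (((((hasDerivAt_pow 3 t).const_mul (k ^ 2)).div_const 3).add
      ((hasDerivAt_pow 2 t).const_mul (k * l))).add
        ((hasDerivAt_id t).const_mul (l ^ 2))).congr_deriv ?_
    simp only [Nat.cast_ofNat, Nat.add_one_sub_one, pow_one, mul_one, eval_add, eval_mul, eval_C,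
      eval_X]
    ring
  rw [intervalIntegral.integral_eq_sub_of_hasDerivAt (fun t _ => hderiv t)
    (intervalIntegrable_eval_mul_eval _ _ _ _)]
  ring

/-- The optimal constant is `12`; it is rounded up to a square. -/
theorem sq_mul_integral_derivative_mul_self_le {q : ℝ[X]} (hq : q.natDegree ≤ 1) {a b : ℝ}
    (hab : a ≤ b) :
    (b - a) ^ 2 * ∫ t in a..b, (derivative q).eval t * (derivative q).eval t ≤
      4 ^ 2 * ∫ t in a..b, q.eval t * q.eval t := by
  obtain ⟨k, l, rfl⟩ := exists_eq_X_add_C_of_natDegree_le_one hq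
  rw [integral_affine_mul_self]
  have hmid : 0 ≤ (b - a) * (k * ((a + b) / 2) + l) ^ 2 :=
    mul_nonneg (sub_nonneg.mpr hab) (sq_nonneg _)
  have hslope : 0 ≤ k ^ 2 * (b - a) ^ 3 :=
    mul_nonneg (sq_nonneg _) (pow_nonneg (sub_nonneg.mpr hab) 3)
  simp only [derivative_add, derivative_mul, derivative_C, zero_mul, derivative_X, mul_one,
    zero_add, add_zero, eval_C, intervalIntegral.integral_const, smul_eq_mul]
  nlinarith

theorem hasDerivWithinAt_biUnion {ι : Type*} {f : ℝ → ℝ} {f' x : ℝ} {s : ι → Set ℝ}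
    (t : Finset ι) (h : ∀ i ∈ t, HasDerivWithinAt f f' (s i) x) :
    HasDerivWithinAt f f' (⋃ i ∈ t, s i) x := by
  classical
  induction t using Finset.induction_on with
  | empty => simp [hasDerivWithinAt_iff_hasFDerivWithinAt]
  | insert i t _ ih =>
    rw [Finset.set_biUnion_insert]
    exact (h i (t.mem_insert_self i)).union (ih fun j hj => h j (Finset.mem_insert_of_mem hj))

end Preliminaries

section PiecewisePolynomials

/-- Piecewise polynomials on the uniform partition of `(0,1)` into `n + 1` intervals: the `j`-th
entry is the polynomial on the `j`-th interval, with no matching condition at the knots. -/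
abbrev PiecewisePoly (n : ℕ) : Type := Fin (n + 1) → ℝ[X]

/-- The mesh size `h` of the uniform partition of `(0,1)` into `n + 1` intervals. -/
def meshSize (n : ℕ) : ℝ := 1 / ((n : ℝ) + 1)

/-- The `j`-th knot of the uniform partition of `(0,1)` into `n + 1` intervals. -/
def knot (n j : ℕ) : ℝ := (j : ℝ) / ((n : ℝ) + 1)

variable {n : ℕ}

theorem meshSize_pos (n : ℕ) : 0 < meshSize n := by unfold meshSize; positivity

theorem knot_zero (n : ℕ) : knot n 0 = 0 := by simp [knot]

theorem knot_last (n : ℕ) : knot n (n + 1) = 1 := by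
  unfold knot
  push_cast
  exact div_self (by positivity)

theorem knot_succ_sub_knot (n j : ℕ) : knot n (j + 1) - knot n j = meshSize n := by
  unfold knot meshSize
  push_cast
  ring

theorem knot_lt_knot_succ (n j : ℕ) : knot n j < knot n (j + 1) :=
  sub_pos.mp (knot_succ_sub_knot n j ▸ meshSize_pos n)

theorem integral_piece_mul_self_nonneg (f : PiecewisePoly n) (j : Fin (n + 1)) :
    0 ≤ ∫ t in knot n j..knot n (j + 1), (f j).eval t * (f j).eval t :=
  intervalIntegral.integral_nonneg (knot_lt_knot_succ n j).le fun _ _ => mul_self_nonneg _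

/-- The `L²(0,1)` inner product of piecewise polynomials. -/
@[reducible] def piecewiseInnerCore (n : ℕ) : InnerProductSpace.Core ℝ (PiecewisePoly n) where
  inner f g := ∑ j, ∫ t in knot n j..knot n (j + 1), (f j).eval t * (g j).eval t
  conj_inner_symm f g := by simp [mul_comm]
  re_inner_nonneg f := by
    rw [RCLike.re_to_real]
    exact Finset.sum_nonneg fun j _ => integral_piece_mul_self_nonneg f j
  add_left f g k := by
    simp only [← Finset.sum_add_distrib]
    refine Finset.sum_congr rfl fun j _ => ?_
    rw [← intervalIntegral.integral_add (intervalIntegrable_eval_mul_eval _ _ _ _)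
      (intervalIntegrable_eval_mul_eval _ _ _ _)]
    simp [add_mul]
  smul_left f g r := by simp [Finset.mul_sum, mul_assoc]
  definite f hf := by
    have hpieces := (Finset.sum_eq_zero_iff_of_nonneg
      fun j _ => integral_piece_mul_self_nonneg f j).mp hf
    exact funext fun j =>
      eq_zero_of_integral_eval_mul_self_eq_zero (knot_lt_knot_succ n j) (hpieces j (by simp))

instance : NormedAddCommGroup (PiecewisePoly n) :=
  (piecewiseInnerCore n).toNormedAddCommGroup

instance : InnerProductSpace ℝ (PiecewisePoly n) :=
  InnerProductSpace.ofCore (piecewiseInnerCore n).toCore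

theorem inner_eq_sum_integral (f g : PiecewisePoly n) :
    inner ℝ f g = ∑ j, ∫ t in knot n j..knot n (j + 1), (f j).eval t * (g j).eval t :=
  rfl

theorem norm_sq_eq_sum_integral (f : PiecewisePoly n) :
    ‖f‖ ^ 2 = ∑ j, ∫ t in knot n j..knot n (j + 1), (f j).eval t * (f j).eval t := by
  rw [← real_inner_self_eq_norm_sq, inner_eq_sum_integral]

/-- Differentiation of every piece. -/
def pieceDeriv (n : ℕ) : Module.End ℝ (PiecewisePoly n) :=
  LinearMap.pi fun j => derivative ∘ₗ LinearMap.proj j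

@[simp]
theorem pieceDeriv_apply (f : PiecewisePoly n) (j : Fin (n + 1)) :
    pieceDeriv n f j = derivative (f j) :=
  rfl

theorem pieceDeriv_pow_apply (f : PiecewisePoly n) (i : ℕ) (j : Fin (n + 1)) :
    (pieceDeriv n ^ i) f j = derivative^[i] (f j) := by
  induction i generalizing f with
  | zero => rfl
  | succ i ih =>
    rw [pow_succ, Module.End.mul_apply, ih, pieceDeriv_apply, Function.iterate_succ_apply]

@[simp]
theorem pieceDeriv_one (n : ℕ) : pieceDeriv n 1 = 0 := by
  ext1 j
  simp

/-- The value of a piecewise polynomial at `0`. -/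
def leftValue (n : ℕ) : PiecewisePoly n →ₗ[ℝ] ℝ := leval 0 ∘ₗ LinearMap.proj 0

/-- The value of a piecewise polynomial at `1`. -/
def rightValue (n : ℕ) : PiecewisePoly n →ₗ[ℝ] ℝ := leval 1 ∘ₗ LinearMap.proj (Fin.last n)

theorem leftValue_apply (f : PiecewisePoly n) : leftValue n f = (f 0).eval 0 := rfl

theorem rightValue_apply (f : PiecewisePoly n) : rightValue n f = (f (Fin.last n)).eval 1 := rfl

/-- The piecewise polynomials whose neighbouring pieces agree at the interior knots. -/
def continuousPieces (n : ℕ) : Submodule ℝ (PiecewisePoly n) :=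
  ⨅ j : Fin n, LinearMap.eqLocus (leval (knot n (j + 1)) ∘ₗ LinearMap.proj j.castSucc)
    (leval (knot n (j + 1)) ∘ₗ LinearMap.proj j.succ)

theorem mem_continuousPieces {f : PiecewisePoly n} : f ∈ continuousPieces n ↔
    ∀ j : Fin n, (f j.castSucc).eval (knot n (j + 1)) = (f j.succ).eval (knot n (j + 1)) := by
  simp [continuousPieces, leval]

theorem one_mem_continuousPieces : (1 : PiecewisePoly n) ∈ continuousPieces n :=
  mem_continuousPieces.mpr fun j => by simp

theorem inner_pieceDeriv_one {u : PiecewisePoly n} (hu : u ∈ continuousPieces n) :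
    inner ℝ (pieceDeriv n u) 1 = rightValue n u - leftValue n u := by
  have hpiece : ∀ j : Fin (n + 1), ∫ t in knot n j..knot n (j + 1),
      (pieceDeriv n u j).eval t * ((1 : PiecewisePoly n) j).eval t =
      (u j).eval (knot n (j + 1)) - (u j).eval (knot n j) := by
    simp [integral_derivative_eval]
  have hmatch : ∀ j : Fin n, (u j.castSucc).eval (knot n (j.castSucc + 1)) =
      (u j.succ).eval (knot n j.succ) := by
    simpa using mem_continuousPieces.mp hu
  rw [inner_eq_sum_integral, Finset.sum_congr rfl fun j _ => hpiece j, Finset.sum_sub_distrib,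
    Fin.sum_univ_castSucc, Fin.sum_univ_succ (fun j => (u j).eval (knot n j)),
    Finset.sum_congr rfl fun j _ => hmatch j]
  simp only [leftValue_apply, rightValue_apply, Fin.val_last, Fin.val_zero, knot_zero, knot_last]
  ring

theorem inner_pieceDeriv_add_inner_pieceDeriv {u v : PiecewisePoly n}
    (hu : u ∈ continuousPieces n) (hv : v ∈ continuousPieces n) :
    inner ℝ (pieceDeriv n u) v + inner ℝ u (pieceDeriv n v) =
      rightValue n u * rightValue n v - leftValue n u * leftValue n v := by
  have huv : u * v ∈ continuousPieces n := mem_continuousPieces.mpr fun j => by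
    simp [mem_continuousPieces.mp hu j, mem_continuousPieces.mp hv j]
  have hends := inner_pieceDeriv_one huv
  simp only [leftValue_apply, rightValue_apply, Pi.mul_apply, eval_mul] at hends ⊢
  rw [← hends]
  simp only [inner_eq_sum_integral, ← Finset.sum_add_distrib]
  refine Finset.sum_congr rfl fun j _ => ?_
  rw [← intervalIntegral.integral_add (intervalIntegrable_eval_mul_eval _ _ _ _)
    (intervalIntegrable_eval_mul_eval _ _ _ _)]
  simp

theorem exists_primitive_leftValue_eq_zero (g : PiecewisePoly n) :
    ∃ u ∈ continuousPieces n, pieceDeriv n u = g ∧ leftValue n u = 0 := by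
  choose P hP using fun j => polynomial_derivative_surjective (g j)
  let increment : Fin (n + 1) → ℝ := fun j => (P j).eval (knot n (j + 1)) - (P j).eval (knot n j)
  refine ⟨fun j => P j + C (∑ i ∈ Finset.Iio j, increment i - (P j).eval (knot n j)),
    mem_continuousPieces.mpr fun j => ?_, ?_, ?_⟩
  · have hIio : Finset.Iio j.succ = insert j.castSucc (Finset.Iio j.castSucc) := by
      ext i
      simp [Fin.lt_def, Fin.ext_iff, le_iff_eq_or_lt]
    rw [hIio, Finset.sum_insert (by simp)]
    simp only [eval_add, eval_C, Fin.val_castSucc, Fin.val_succ, increment]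
    ring
  · ext1 j
    simp [hP]
  · have hIio : Finset.Iio (0 : Fin (n + 1)) = ∅ := Finset.Iio_bot
    simp [leftValue_apply, knot_zero, hIio]

/-- The `H¹`-conforming piecewise polynomials, with homogeneous Dirichlet conditions at both
endpoints if the flag is `true`. -/
def conforming (n : ℕ) : Bool → Submodule ℝ (PiecewisePoly n)
  | false => continuousPieces n
  | true => continuousPieces n ⊓ (LinearMap.ker (leftValue n) ⊓ LinearMap.ker (rightValue n))

theorem conforming_le_continuousPieces (b : Bool) : conforming n b ≤ continuousPieces n := by
  cases b
  · exact le_rfl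
  · exact inf_le_left

theorem inner_pieceDeriv_eq_neg {b : Bool} {u v : PiecewisePoly n} (hu : u ∈ conforming n b)
    (hv : v ∈ conforming n !b) : inner ℝ (pieceDeriv n u) v = -inner ℝ u (pieceDeriv n v) := by
  have hparts := inner_pieceDeriv_add_inner_pieceDeriv (conforming_le_continuousPieces _ hu)
    (conforming_le_continuousPieces _ hv)
  have hboundary : rightValue n u * rightValue n v - leftValue n u * leftValue n v = 0 := by
    cases b
    · obtain ⟨-, hleft, hright⟩ := hv
      simp [LinearMap.mem_ker.mp hleft, LinearMap.mem_ker.mp hright]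
    · obtain ⟨-, hleft, hright⟩ := hu
      simp [LinearMap.mem_ker.mp hleft, LinearMap.mem_ker.mp hright]
  linarith

theorem exists_primitive_mem_conforming {b : Bool} {g : PiecewisePoly n}
    (hg : b = true → inner ℝ g 1 = 0) : ∃ u ∈ conforming n b, pieceDeriv n u = g := by
  obtain ⟨u, hu, rfl, hleft⟩ := exists_primitive_leftValue_eq_zero g
  cases b
  · exact ⟨u, hu, rfl⟩
  · have hright : rightValue n u = 0 := by
      linarith [inner_pieceDeriv_one hu, hg rfl]
    exact ⟨u, ⟨hu, hleft, hright⟩, rfl⟩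

theorem exists_primitive_inner_one_eq (g : PiecewisePoly n) (c : ℝ) :
    ∃ u ∈ continuousPieces n, pieceDeriv n u = g ∧ inner ℝ u 1 = c := by
  obtain ⟨u, hu, hderiv, -⟩ := exists_primitive_leftValue_eq_zero g
  have hone : inner ℝ (1 : PiecewisePoly n) 1 ≠ 0 := by
    rw [inner_self_ne_zero]
    exact one_ne_zero
  refine ⟨u + ((c - inner ℝ u 1) / inner ℝ (1 : PiecewisePoly n) 1) • 1,
    add_mem hu (Submodule.smul_mem _ _ one_mem_continuousPieces), ?_, ?_⟩
  · simp [hderiv]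
  · rw [inner_add_left, real_inner_smul_left, div_mul_cancel₀ _ hone]
    ring

theorem inner_pieceDeriv_one_eq_zero {u : PiecewisePoly n} (hu : u ∈ conforming n true) :
    inner ℝ (pieceDeriv n u) 1 = 0 := by
  rw [inner_pieceDeriv_eq_neg hu one_mem_continuousPieces, pieceDeriv_one, inner_zero_right,
    neg_zero]

end PiecewisePolynomials

section SplineSpaces

/-- Splines of degree `p` and maximal smoothness, by recursion on `p`: the derivatives of order
`i < p` are continuous, and vanish at both endpoints if `B i` is `true`. -/
def splineSpace (n : ℕ) : (ℕ → Bool) → ℕ → Submodule ℝ (PiecewisePoly n)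
  | _, 0 => LinearMap.ker (pieceDeriv n)
  | B, p + 1 => conforming n (B 0) ⊓ (splineSpace n (fun i => B (i + 1)) p).comap (pieceDeriv n)

variable {n p : ℕ} {B : ℕ → Bool}

theorem mem_splineSpace_succ {f : PiecewisePoly n} : f ∈ splineSpace n B (p + 1) ↔
    f ∈ conforming n (B 0) ∧ pieceDeriv n f ∈ splineSpace n (fun i => B (i + 1)) p :=
  Iff.rfl

theorem mem_splineSpace_iff {f : PiecewisePoly n} : f ∈ splineSpace n B p ↔
    (∀ j, (f j).natDegree ≤ p) ∧ ∀ i < p, (pieceDeriv n ^ i) f ∈ conforming n (B i) := by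
  induction p generalizing f B with
  | zero => simp [splineSpace, funext_iff, derivative_eq_zero]
  | succ p ih =>
    have hdegree : ∀ j, (derivative (f j)).natDegree ≤ p ↔ (f j).natDegree ≤ p + 1 := fun j => by
      rw [natDegree_derivative, Nat.sub_le_iff_le_add]
    have hderiv : ∀ i, (pieceDeriv n ^ i) (pieceDeriv n f) = (pieceDeriv n ^ (i + 1)) f :=
      fun i => by rw [pow_succ, Module.End.mul_apply]
    simp only [mem_splineSpace_succ, ih, pieceDeriv_apply, hdegree, hderiv,
      Nat.forall_lt_succ_left, pow_zero, Module.End.one_apply]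
    tauto

instance : FiniteDimensional ℝ (splineSpace n B p) := by
  let coefficients : splineSpace n B p →ₗ[ℝ] Fin (n + 1) → Fin (p + 1) → ℝ :=
    (LinearMap.pi fun j => LinearMap.pi fun i => lcoeff ℝ i ∘ₗ LinearMap.proj j) ∘ₗ
      (splineSpace n B p).subtype
  refine FiniteDimensional.of_injective coefficients
    ((injective_iff_map_eq_zero _).mpr fun f hf => ?_)
  ext j i
  rcases lt_or_ge p i with hi | hi
  · exact coeff_eq_zero_of_natDegree_lt (((mem_splineSpace_iff.mp f.2).1 j).trans_lt hi)
  · exact congrFun (congrFun hf j) ⟨i, Nat.lt_succ_of_le hi⟩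

theorem one_mem_splineSpace (h0 : B 0 = false) :
    (1 : PiecewisePoly n) ∈ splineSpace n B p := by
  cases p with
  | zero => exact pieceDeriv_one n
  | succ p =>
    refine mem_splineSpace_succ.mpr ⟨h0 ▸ one_mem_continuousPieces, ?_⟩
    rw [pieceDeriv_one]
    exact zero_mem _

theorem exists_mem_splineSpace_zero_norm_sub_le (B : ℕ → Bool) (u : PiecewisePoly n) :
    ∃ v ∈ splineSpace n B 0, ‖u - v‖ ≤ meshSize n * ‖pieceDeriv n u‖ := by
  refine ⟨fun j => C ((u j).eval (knot n j)), funext fun j => by simp, ?_⟩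
  refine le_of_sq_le_sq ?_ (mul_nonneg (meshSize_pos n).le (norm_nonneg _))
  rw [mul_pow, norm_sq_eq_sum_integral, norm_sq_eq_sum_integral, Finset.mul_sum]
  refine Finset.sum_le_sum fun j _ => ?_
  simpa [knot_succ_sub_knot] using
    integral_sub_left_mul_self_le (u j) (knot_lt_knot_succ n j).le

/-- Aubin–Nitsche duality: `φ` solves the dual problem for the error `g`, and Galerkin
orthogonality lets one subtract `ψ`. -/
theorem norm_le_meshSize_mul_norm_pieceDeriv {b : Bool} {g φ ψ : PiecewisePoly n}
    (hg : g ∈ conforming n b) (hφ : φ ∈ conforming n !b) (hφg : pieceDeriv n φ = g)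
    (horth : inner ℝ (pieceDeriv n g) ψ = 0) (happrox : ‖φ - ψ‖ ≤ meshSize n * ‖g‖) :
    ‖g‖ ≤ meshSize n * ‖pieceDeriv n g‖ := by
  have hsq : ‖g‖ * ‖g‖ ≤ (meshSize n * ‖pieceDeriv n g‖) * ‖g‖ :=
    calc ‖g‖ * ‖g‖ = -inner ℝ (pieceDeriv n g) φ := by
          rw [inner_pieceDeriv_eq_neg hg hφ, hφg, neg_neg, real_inner_self_eq_norm_mul_norm]
      _ = -inner ℝ (pieceDeriv n g) (φ - ψ) := by rw [inner_sub_right, horth, sub_zero]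
      _ ≤ ‖pieceDeriv n g‖ * ‖φ - ψ‖ :=
          (neg_le_abs _).trans (abs_real_inner_le_norm _ _)
      _ ≤ ‖pieceDeriv n g‖ * (meshSize n * ‖g‖) := by gcongr
      _ = (meshSize n * ‖pieceDeriv n g‖) * ‖g‖ := by ring
  rcases (norm_nonneg g).eq_or_lt with hzero | hpos
  · rw [← hzero]
    exact mul_nonneg (meshSize_pos n).le (norm_nonneg _)
  · exact le_of_mul_le_mul_right hsq hpos

theorem exists_primitive_and_dual_primitive {b : Bool} (u : PiecewisePoly n) {w : PiecewisePoly n}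
    (hw : b = true → inner ℝ w 1 = 0) :
    ∃ v ∈ conforming n b, pieceDeriv n v = w ∧ ∃ φ ∈ conforming n !b, pieceDeriv n φ = u - v := by
  cases b
  · obtain ⟨v, hv, hderiv, hmean⟩ := exists_primitive_inner_one_eq w (inner ℝ u 1)
    exact ⟨v, hv, hderiv, exists_primitive_mem_conforming fun _ => by
      rw [inner_sub_left, hmean, sub_self]⟩
  · obtain ⟨v, hv, hderiv⟩ := exists_primitive_mem_conforming hw
    exact ⟨v, hv, hderiv, exists_primitive_mem_conforming (by simp)⟩

theorem exists_mem_splineSpace_succ_norm_sub_le (hB : ∀ i, B (i + 1) = !B i)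
    (hdual : ∀ φ ∈ conforming n (B 1), ∃ ψ ∈ splineSpace n (fun i => B (i + 1)) p,
      ‖φ - ψ‖ ≤ meshSize n * ‖pieceDeriv n φ‖)
    {u : PiecewisePoly n} (hu : u ∈ conforming n (B 0)) :
    ∃ v ∈ splineSpace n B (p + 1), ‖u - v‖ ≤ meshSize n * ‖pieceDeriv n u‖ ∧
      ‖pieceDeriv n v‖ ≤ ‖pieceDeriv n u‖ := by
  set W := splineSpace n (fun i => B (i + 1)) p
  set w := W.starProjection (pieceDeriv n u)
  have horth : ∀ z ∈ W, inner ℝ (pieceDeriv n u - w) z = 0 := fun z hz =>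
    W.starProjection_inner_eq_zero _ _ hz
  have hmean : B 0 = true → inner ℝ w 1 = 0 := fun h0 => by
    have hone : (1 : PiecewisePoly n) ∈ W := one_mem_splineSpace (by simp [hB, h0])
    have hsplit := horth 1 hone
    rw [inner_sub_left, inner_pieceDeriv_one_eq_zero (h0 ▸ hu)] at hsplit
    linarith
  obtain ⟨v, hv, hvw, φ, hφ, hφg⟩ := exists_primitive_and_dual_primitive u hmean
  have hderiv : pieceDeriv n (u - v) = pieceDeriv n u - w := by rw [map_sub, hvw]
  obtain ⟨ψ, hψ, happrox⟩ := hdual φ (by rwa [hB])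
  refine ⟨v, mem_splineSpace_succ.mpr ⟨hv, hvw ▸ W.starProjection_apply_mem _⟩, ?_, ?_⟩
  · calc ‖u - v‖ ≤ meshSize n * ‖pieceDeriv n (u - v)‖ :=
          norm_le_meshSize_mul_norm_pieceDeriv (sub_mem hu hv) hφ hφg
            (hderiv ▸ horth ψ hψ) (hφg ▸ happrox)
      _ ≤ meshSize n * ‖pieceDeriv n u‖ := by
          rw [hderiv, ← W.starProjection_orthogonal_val]
          exact mul_le_mul_of_nonneg_left (Wᗮ.norm_starProjection_apply_le _) (meshSize_pos n).le
  · rw [hvw]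
    exact W.norm_starProjection_apply_le _

theorem exists_mem_splineSpace_norm_sub_le (hB : ∀ i, B (i + 1) = !B i)
    {u : PiecewisePoly n} (hu : u ∈ conforming n (B 0)) :
    ∃ v ∈ splineSpace n B p, ‖u - v‖ ≤ meshSize n * ‖pieceDeriv n u‖ := by
  induction p generalizing B u with
  | zero => exact exists_mem_splineSpace_zero_norm_sub_le B u
  | succ p ih =>
    obtain ⟨v, hv, happrox, -⟩ := exists_mem_splineSpace_succ_norm_sub_le hB
      (fun φ hφ => ih (fun i => hB (i + 1)) hφ) hu
    exact ⟨v, hv, happrox⟩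

theorem meshSize_mul_norm_pieceDeriv_le_of_natDegree_le_one {u : PiecewisePoly n}
    (hu : ∀ j, (u j).natDegree ≤ 1) : meshSize n * ‖pieceDeriv n u‖ ≤ 4 * ‖u‖ := by
  refine le_of_sq_le_sq ?_ (by positivity)
  rw [mul_pow, mul_pow, norm_sq_eq_sum_integral, norm_sq_eq_sum_integral, Finset.mul_sum,
    Finset.mul_sum]
  refine Finset.sum_le_sum fun j _ => ?_
  simpa only [knot_succ_sub_knot, pieceDeriv_apply] using
    sq_mul_integral_derivative_mul_self_le (hu j) (knot_lt_knot_succ n j).le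

theorem meshSize_mul_norm_pieceDeriv_le (hB : ∀ i, B (i + 1) = !B i) {u : PiecewisePoly n}
    (hu : u ∈ splineSpace n B (p + 1)) : meshSize n * ‖pieceDeriv n u‖ ≤ 4 * ‖u‖ := by
  induction p generalizing B u with
  | zero => exact meshSize_mul_norm_pieceDeriv_le_of_natDegree_le_one (mem_splineSpace_iff.mp hu).1
  | succ p ih =>
    obtain ⟨hu, hderiv⟩ := mem_splineSpace_succ.mp hu
    set u' := pieceDeriv n u
    have hsecond : meshSize n * ‖pieceDeriv n u'‖ ≤ 4 * ‖u'‖ :=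
      ih (fun i => hB (i + 1)) hderiv
    have hu' : u' ∈ conforming n !(B 0) := hB 0 ▸ (mem_splineSpace_succ.mp hderiv).1
    have hsq : (meshSize n * ‖u'‖) * ‖u'‖ ≤ (4 * ‖u‖) * ‖u'‖ :=
      calc (meshSize n * ‖u'‖) * ‖u'‖ = meshSize n * -inner ℝ u (pieceDeriv n u') := by
            rw [← inner_pieceDeriv_eq_neg hu hu', real_inner_self_eq_norm_mul_norm, mul_assoc]
        _ ≤ meshSize n * (‖u‖ * ‖pieceDeriv n u'‖) := by
            gcongr
            · exact (meshSize_pos n).le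
            · exact (neg_le_abs _).trans (abs_real_inner_le_norm _ _)
        _ = ‖u‖ * (meshSize n * ‖pieceDeriv n u'‖) := by ring
        _ ≤ ‖u‖ * (4 * ‖u'‖) := by gcongr
        _ = (4 * ‖u‖) * ‖u'‖ := by ring
    rcases (norm_nonneg u').eq_or_lt with hzero | hpos
    · rw [← hzero, mul_zero]
      positivity
    · exact le_of_mul_le_mul_right hsq hpos

end SplineSpaces

section Splitting

/-- The spline space `S`. -/
abbrev fullSplines (n p : ℕ) : Submodule ℝ (PiecewisePoly n) := splineSpace n (fun _ => false) p

/-- The spline space `S₀`, whose odd derivatives vanish at both endpoints. -/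
abbrev reducedSplines (n p : ℕ) : Submodule ℝ (PiecewisePoly n) := splineSpace n Nat.bodd p

/-- `S₀` and its orthogonal complement among all piecewise polynomials; intersecting with `S`
yields `S₀` and `S₁`. -/
def component (n p : ℕ) : Bool → Submodule ℝ (PiecewisePoly n)
  | false => reducedSplines n p
  | true => (reducedSplines n p)ᗮ

instance (n p : ℕ) (a : Bool) : (component n p a).HasOrthogonalProjection := by
  cases a <;> unfold component <;> infer_instance

/-- The `L²`-orthogonal projectors `Q₀` and `Q₁ = I - Q₀`. -/
def componentProj (n p : ℕ) (a : Bool) : Module.End ℝ (PiecewisePoly n) :=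
  (component n p a).starProjection.toLinearMap

variable {n p : ℕ}

theorem componentProj_mem (a : Bool) (f : PiecewisePoly n) :
    componentProj n p a f ∈ component n p a :=
  (component n p a).starProjection_apply_mem f

theorem norm_componentProj_le (a : Bool) (f : PiecewisePoly n) :
    ‖componentProj n p a f‖ ≤ ‖f‖ :=
  (component n p a).norm_starProjection_apply_le f

theorem inner_componentProj_eq {a : Bool} (f : PiecewisePoly n) {g : PiecewisePoly n}
    (hg : g ∈ component n p a) : inner ℝ (componentProj n p a f) g = inner ℝ f g :=
  (sub_eq_zero.mp (inner_sub_left (𝕜 := ℝ) f _ g ▸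
    (component n p a).starProjection_inner_eq_zero f g hg)).symm

theorem sum_componentProj (f : PiecewisePoly n) : ∑ a, componentProj n p a f = f := by
  rw [Fintype.sum_bool, add_comm]
  exact (reducedSplines n p).starProjection_add_starProjection_orthogonal f

theorem reducedSplines_le_fullSplines : reducedSplines n p ≤ fullSplines n p := fun f hf => by
  rw [mem_splineSpace_iff] at hf ⊢
  exact ⟨hf.1, fun i hi => conforming_le_continuousPieces _ (hf.2 i hi)⟩

theorem fullSplines_le_continuousPieces (hp : 1 ≤ p) : fullSplines n p ≤ continuousPieces n :=
  fun _ hf => (mem_splineSpace_iff.mp hf).2 0 hp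

theorem componentProj_mem_fullSplines (a : Bool) {f : PiecewisePoly n}
    (hf : f ∈ fullSplines n p) : componentProj n p a f ∈ fullSplines n p := by
  have hreduced : componentProj n p false f ∈ fullSplines n p :=
    reducedSplines_le_fullSplines (componentProj_mem false f)
  cases a
  · exact hreduced
  · have hsplit := sum_componentProj (p := p) f
    rw [Fintype.sum_bool] at hsplit
    rw [eq_sub_of_add_eq hsplit]
    exact sub_mem hf hreduced

/-- Compare `Q₀ f` with an approximant of `f` that is stable in `H¹`, and bound the difference by
the inverse inequality on `S₀`. -/
theorem norm_pieceDeriv_reducedProj_le {f : PiecewisePoly n} (hf : f ∈ continuousPieces n) :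
    ‖pieceDeriv n (componentProj n (p + 1) false f)‖ ≤ 5 * ‖pieceDeriv n f‖ := by
  obtain ⟨v, hv, happrox, hstable⟩ := exists_mem_splineSpace_succ_norm_sub_le (p := p)
    Nat.bodd_succ (fun φ hφ => exists_mem_splineSpace_norm_sub_le
      (B := fun i => Nat.bodd (i + 1)) (fun i => Nat.bodd_succ (i + 1)) hφ) hf
  have hfix : componentProj n (p + 1) false v = v :=
    Submodule.starProjection_eq_self_iff.mpr hv
  set w := componentProj n (p + 1) false (f - v) with hw
  have hinverse : meshSize n * ‖pieceDeriv n w‖ ≤ meshSize n * (4 * ‖pieceDeriv n f‖) :=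
    calc meshSize n * ‖pieceDeriv n w‖ ≤ 4 * ‖w‖ :=
          meshSize_mul_norm_pieceDeriv_le Nat.bodd_succ (componentProj_mem false (f - v))
      _ ≤ 4 * (meshSize n * ‖pieceDeriv n f‖) := by
          gcongr
          exact (norm_componentProj_le _ _).trans happrox
      _ = meshSize n * (4 * ‖pieceDeriv n f‖) := by ring
  calc ‖pieceDeriv n (componentProj n (p + 1) false f)‖
      = ‖pieceDeriv n v + pieceDeriv n w‖ := by
        rw [← map_add, hw, map_sub, hfix, add_sub_cancel]
    _ ≤ ‖pieceDeriv n v‖ + ‖pieceDeriv n w‖ := norm_add_le _ _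
    _ ≤ 5 * ‖pieceDeriv n f‖ := by linarith [le_of_mul_le_mul_left hinverse (meshSize_pos n)]

theorem norm_pieceDeriv_componentProj_le (hp : 1 ≤ p) (a : Bool) {f : PiecewisePoly n}
    (hf : f ∈ continuousPieces n) :
    ‖pieceDeriv n (componentProj n p a f)‖ ≤ 6 * ‖pieceDeriv n f‖ := by
  obtain ⟨p, rfl⟩ := Nat.exists_eq_add_of_le' hp
  have hreduced := norm_pieceDeriv_reducedProj_le (p := p) hf
  cases a
  · linarith [norm_nonneg (pieceDeriv n f)]
  · have hsplit := congrArg (pieceDeriv n) (sum_componentProj (p := p + 1) f)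
    rw [Fintype.sum_bool, map_add] at hsplit
    rw [eq_sub_of_add_eq hsplit]
    exact (norm_sub_le _ _).trans (by linarith)

end Splitting

section Realization

/-- The index of the piece that governs the values at `x`: knots belong to the piece on their
right, and points outside `[0,1)` to the first or last piece. -/
def pieceIndex (n : ℕ) (x : ℝ) : Fin (n + 1) := ⟨min ⌊x * ((n : ℝ) + 1)⌋₊ n, by omega⟩

/-- The function represented by a piecewise polynomial, extended polynomially outside `[0,1]`. -/
def realize (n : ℕ) : PiecewisePoly n →ₗ[ℝ] ℝ → ℝ :=
  LinearMap.pi fun x => leval x ∘ₗ LinearMap.proj (pieceIndex n x)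

variable {n p : ℕ}

theorem realize_apply (f : PiecewisePoly n) (x : ℝ) :
    realize n f x = (f (pieceIndex n x)).eval x :=
  rfl

theorem pieceIndex_eq_iff {x : ℝ} {j : Fin (n + 1)} : pieceIndex n x = j ↔
    ((j : ℕ) = 0 ∨ knot n j ≤ x) ∧ ((j : ℕ) = n ∨ x < knot n (j + 1)) := by
  have hpos : (0 : ℝ) < n + 1 := by positivity
  have hlower : (j : ℕ) ≤ ⌊x * ((n : ℝ) + 1)⌋₊ ↔ (j : ℕ) = 0 ∨ knot n j ≤ x := by
    rcases eq_or_ne (j : ℕ) 0 with hj | hj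
    · simp [hj]
    · rw [Nat.le_floor_iff' hj, knot, div_le_iff₀ hpos, or_iff_right hj]
  have hupper : ⌊x * ((n : ℝ) + 1)⌋₊ < (j : ℕ) + 1 ↔ x < knot n (j + 1) := by
    rw [Nat.floor_lt' (Nat.succ_ne_zero _), knot, lt_div_iff₀ hpos]
  rw [← hlower, ← hupper, Fin.ext_iff]
  simp only [pieceIndex]
  omega

theorem mem_pieceSet_succ_iff {j : ℕ} {x : ℝ} : x ∈ pieceSet (n + 1) j ↔
    (j = 0 ∨ knot n j ≤ x) ∧ (j = n ∨ x ≤ knot n (j + 1)) := by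
  have hle := (knot_lt_knot_succ n j).le
  have hfirst : (1 : ℝ) / (n + 1) = knot n 1 := by simp [knot]
  have hlast : ((n : ℝ) + 1 - 1) / (n + 1) = knot n n := by simp [knot]
  have hleft : (j : ℝ) / (n + 1) = knot n j := rfl
  have hright : ((j : ℝ) + 1) / (n + 1) = knot n (j + 1) := by simp [knot]
  simp only [pieceSet, Nat.add_sub_cancel, Nat.cast_add, Nat.cast_one, hfirst, hlast, hleft,
    hright]
  split_ifs <;> grind

theorem isClosed_pieceSet (m j : ℕ) : IsClosed (pieceSet m j) := by
  unfold pieceSet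
  refine IsClosed.union ?_ ?_ <;> split_ifs
  exacts [isClosed_Iic, isClosed_Icc, isClosed_Ici, isClosed_empty]

theorem mem_pieceSet_pieceIndex (n : ℕ) (x : ℝ) : x ∈ pieceSet (n + 1) (pieceIndex n x) := by
  obtain ⟨hlower, hupper⟩ := pieceIndex_eq_iff.mp (Eq.refl (pieceIndex n x))
  exact mem_pieceSet_succ_iff.mpr ⟨hlower, hupper.imp_right le_of_lt⟩

theorem iUnion_pieceSet (n : ℕ) : ⋃ j : Fin (n + 1), pieceSet (n + 1) j = univ :=
  eq_univ_of_forall fun x => mem_iUnion.mpr ⟨_, mem_pieceSet_pieceIndex n x⟩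

theorem Icc_knot_subset_pieceSet (n j : ℕ) :
    Icc (knot n j) (knot n (j + 1)) ⊆ pieceSet (n + 1) j := fun _ hx =>
  mem_pieceSet_succ_iff.mpr ⟨.inr hx.1, .inr hx.2⟩

theorem realize_eq_eval_of_mem_pieceSet {f : PiecewisePoly n} (hf : f ∈ continuousPieces n)
    {j : Fin (n + 1)} {x : ℝ} (hx : x ∈ pieceSet (n + 1) j) : realize n f x = (f j).eval x := by
  obtain ⟨hlower, hupper⟩ := mem_pieceSet_succ_iff.mp hx
  by_cases hlt : (j : ℕ) = n ∨ x < knot n (j + 1)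
  · rw [realize_apply, pieceIndex_eq_iff.mpr ⟨hlower, hlt⟩]
  · obtain ⟨hj, hge⟩ := not_or.mp hlt
    obtain rfl : x = knot n (j + 1) := le_antisymm (hupper.resolve_left hj) (not_lt.mp hge)
    obtain ⟨i, rfl⟩ := Fin.exists_castSucc_eq.mpr (Fin.val_ne_iff.mp hj : j ≠ Fin.last n)
    have hindex : pieceIndex n (knot n (i + 1)) = i.succ :=
      pieceIndex_eq_iff.mpr ⟨.inr (by simp), .inr (by simpa using knot_lt_knot_succ n (i + 1))⟩
    rw [realize_apply, Fin.val_castSucc, hindex, mem_continuousPieces.mp hf i]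

theorem continuous_realize {f : PiecewisePoly n} (hf : f ∈ continuousPieces n) :
    Continuous (realize n f) :=
  (locallyFinite_of_finite _).continuous (iUnion_pieceSet n) (fun j => isClosed_pieceSet _ j)
    fun j => (f j).continuous.continuousOn.congr fun _ hx => realize_eq_eval_of_mem_pieceSet hf hx

theorem hasDerivAt_realize {f : PiecewisePoly n} (hf : f ∈ continuousPieces n)
    (hf' : pieceDeriv n f ∈ continuousPieces n) (x : ℝ) :
    HasDerivAt (realize n f) (realize n (pieceDeriv n f) x) x := by
  have hpiece : ∀ j : Fin (n + 1), HasDerivWithinAt (realize n f)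
      (realize n (pieceDeriv n f) x) (pieceSet (n + 1) j) x := fun j => by
    by_cases hx : x ∈ pieceSet (n + 1) j
    · rw [realize_eq_eval_of_mem_pieceSet hf' hx]
      exact ((f j).hasDerivAt x).hasDerivWithinAt.congr
        (fun _ hy => realize_eq_eval_of_mem_pieceSet hf hy) (realize_eq_eval_of_mem_pieceSet hf hx)
    · rw [← (isClosed_pieceSet (n + 1) j).closure_eq] at hx
      exact HasFDerivWithinAt.of_notMem_closure hx
  have hunion := hasDerivWithinAt_biUnion Finset.univ fun j _ => hpiece j
  simpa only [Finset.mem_univ, iUnion_true, iUnion_pieceSet, hasDerivWithinAt_univ] using hunion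

theorem contDiff_realize {k : ℕ} {f : PiecewisePoly n}
    (hf : ∀ i ≤ k, (pieceDeriv n ^ i) f ∈ continuousPieces n) : ContDiff ℝ k (realize n f) := by
  induction k generalizing f with
  | zero => exact contDiff_zero.mpr (continuous_realize (hf 0 le_rfl))
  | succ k ih =>
    have hderiv : ∀ x, HasDerivAt (realize n f) (realize n (pieceDeriv n f) x) x :=
      hasDerivAt_realize (hf 0 (Nat.zero_le _)) (hf 1 (by omega))
    push_cast
    refine contDiff_succ_iff_deriv.mpr ⟨fun x => (hderiv x).differentiableAt, by simp, ?_⟩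
    rw [funext fun x => (hderiv x).deriv]
    exact ih fun i hi => hf (i + 1) (by omega)

theorem isSpline_realize (hp : 1 ≤ p) {f : PiecewisePoly n} (hf : f ∈ fullSplines n p) :
    IsSpline (n + 1) p (realize n f) := by
  obtain ⟨hdegree, hsmooth⟩ := mem_splineSpace_iff.mp hf
  exact ⟨(contDiff_realize fun i hi => hsmooth i (by omega)).contDiffOn, fun j hj =>
    ⟨f ⟨j, hj⟩, hdegree _, fun x hx =>
      realize_eq_eval_of_mem_pieceSet (fullSplines_le_continuousPieces hp hf) (j := ⟨j, hj⟩) hx⟩⟩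

theorem iteratedDeriv_eq_eval_of_eqOn {f : ℝ → ℝ} {q : ℝ[X]} {i : ℕ} {s : Set ℝ} {x : ℝ}
    (hs : UniqueDiffOn ℝ s) (hx : x ∈ s) (hf : ContDiffAt ℝ i f x)
    (heq : EqOn f (fun t => q.eval t) s) :
    iteratedDeriv i f x = (derivative^[i] q).eval x := by
  rw [← iteratedDerivWithin_eq_iteratedDeriv hs hf hx, iteratedDerivWithin_congr heq hx,
    iteratedDerivWithin_eq_iteratedDeriv hs (contDiff_polynomial_eval q i).contDiffAt hx,
    iteratedDeriv_polynomial_eval]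

theorem knot_mem_Ioo {j : ℕ} (hj : j < n) : knot n (j + 1) ∈ Ioo (0 : ℝ) 1 := by
  unfold knot
  refine ⟨by positivity, (div_lt_one (by positivity)).mpr ?_⟩
  exact_mod_cast Nat.succ_lt_succ hj

theorem exists_fullSplines_realize_eq {u : ℝ → ℝ} (hu : IsSpline (n + 1) p u) :
    ∃ f ∈ fullSplines n p, realize n f = u := by
  obtain ⟨hsmooth, hpoly⟩ := hu
  choose f hdegree hf using fun j : Fin (n + 1) => hpoly j j.2
  refine ⟨f, mem_splineSpace_iff.mpr ⟨hdegree, fun i hi => mem_continuousPieces.mpr fun j => ?_⟩,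
    funext fun x => (hf _ x (mem_pieceSet_pieceIndex n x)).symm⟩
  have hdiff : ContDiffAt ℝ i u (knot n (j + 1)) :=
    (hsmooth.contDiffAt (isOpen_Ioo.mem_nhds (knot_mem_Ioo j.2))).of_le
      (by exact_mod_cast Nat.le_sub_one_of_lt hi)
  have hside : ∀ l : Fin (n + 1), knot n (j + 1) ∈ Icc (knot n l) (knot n (l + 1)) →
      iteratedDeriv i u (knot n (j + 1)) = (derivative^[i] (f l)).eval (knot n (j + 1)) :=
    fun l hl => iteratedDeriv_eq_eval_of_eqOn (uniqueDiffOn_Icc (knot_lt_knot_succ n l)) hl hdiff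
      fun x hx => hf l x (Icc_knot_subset_pieceSet n l hx)
  rw [pieceDeriv_pow_apply, pieceDeriv_pow_apply,
    ← hside j.castSucc ⟨(knot_lt_knot_succ n j).le, le_rfl⟩,
    ← hside j.succ ⟨le_rfl, (knot_lt_knot_succ n (j + 1)).le⟩]

theorem iteratedDeriv_realize_zero (f : PiecewisePoly n) (i : ℕ) :
    iteratedDeriv i (realize n f) 0 = leftValue n ((pieceDeriv n ^ i) f) := by
  have hlocal : realize n f =ᶠ[nhds 0] fun x => (f 0).eval x := by
    filter_upwards [Iio_mem_nhds (knot_zero n ▸ knot_lt_knot_succ n 0)] with x hx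
    rw [realize_apply, (pieceIndex_eq_iff (j := 0)).mpr ⟨.inl rfl, .inr hx⟩]
  rw [hlocal.iteratedDeriv_eq, iteratedDeriv_polynomial_eval, leftValue_apply,
    pieceDeriv_pow_apply]

theorem iteratedDeriv_realize_one (f : PiecewisePoly n) (i : ℕ) :
    iteratedDeriv i (realize n f) 1 = rightValue n ((pieceDeriv n ^ i) f) := by
  have hlocal : realize n f =ᶠ[nhds 1] fun x => (f (Fin.last n)).eval x := by
    filter_upwards [Ioi_mem_nhds (knot_last n ▸ knot_lt_knot_succ n n)] with x hx
    rw [realize_apply,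
      (pieceIndex_eq_iff (j := Fin.last n)).mpr ⟨.inr (le_of_lt hx), .inl rfl⟩]
  rw [hlocal.iteratedDeriv_eq, iteratedDeriv_polynomial_eval, rightValue_apply,
    pieceDeriv_pow_apply]

theorem mem_reducedSplines_iff {f : PiecewisePoly n} : f ∈ reducedSplines n p ↔
    f ∈ fullSplines n p ∧ ∀ l : ℕ, 2 * l + 1 < p →
      iteratedDeriv (2 * l + 1) (realize n f) 0 = 0 ∧
      iteratedDeriv (2 * l + 1) (realize n f) 1 = 0 := by
  simp only [iteratedDeriv_realize_zero, iteratedDeriv_realize_one]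
  refine ⟨fun hf => ⟨reducedSplines_le_fullSplines hf, fun l hl => ?_⟩, fun ⟨hf, hodd⟩ => ?_⟩
  · have hmem := (mem_splineSpace_iff.mp hf).2 _ hl
    rw [show Nat.bodd (2 * l + 1) = true by simp] at hmem
    exact hmem.2
  · obtain ⟨hdegree, hsmooth⟩ := mem_splineSpace_iff.mp hf
    refine mem_splineSpace_iff.mpr ⟨hdegree, fun i hi => ?_⟩
    obtain ⟨l, rfl | rfl⟩ := i.even_or_odd'
    · simpa using hsmooth _ hi
    · rw [show Nat.bodd (2 * l + 1) = true by simp]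
      exact ⟨hsmooth _ hi, hodd l hi⟩

end Realization

section UnitInterval

variable {n p : ℕ}

theorem realize_eq_eval_of_mem_Ioo (f : PiecewisePoly n) {j : Fin (n + 1)} {x : ℝ}
    (hx : x ∈ Ioo (knot n j) (knot n (j + 1))) : realize n f x = (f j).eval x := by
  rw [realize_apply, pieceIndex_eq_iff.mpr ⟨.inr hx.1.le, .inr hx.2⟩]

theorem ae_exists_mem_Ioo_knot (n : ℕ) : ∀ᵐ x ∂volume.restrict (Ioo (0 : ℝ) 1),
    ∃ j : Fin (n + 1), x ∈ Ioo (knot n j) (knot n (j + 1)) := by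
  rw [ae_restrict_iff' measurableSet_Ioo]
  filter_upwards [(countable_range (knot n)).ae_notMem volume] with x hknot hx
  obtain ⟨hlower, hupper⟩ := pieceIndex_eq_iff.mp (Eq.refl (pieceIndex n x))
  refine ⟨pieceIndex n x, ?_, hupper.elim (fun hlast => ?_) id⟩
  · refine lt_of_le_of_ne (hlower.elim (fun hfirst => ?_) id) fun h => hknot ⟨_, h⟩
    simpa only [hfirst, knot_zero] using hx.1.le
  · simpa only [hlast, knot_last] using hx.2

theorem ae_hasDerivAt_realize (n : ℕ) : ∀ᵐ x ∂volume.restrict (Ioo (0 : ℝ) 1),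
    ∀ f : PiecewisePoly n, HasDerivAt (realize n f) (realize n (pieceDeriv n f) x) x := by
  filter_upwards [ae_exists_mem_Ioo_knot n] with x ⟨j, hx⟩ f
  rw [realize_eq_eval_of_mem_Ioo _ hx]
  refine ((f j).hasDerivAt x).congr_of_eventuallyEq ?_
  filter_upwards [Ioo_mem_nhds hx.1 hx.2] with y hy using realize_eq_eval_of_mem_Ioo f hy

theorem eqOn_realize_mul_realize (f g : PiecewisePoly n) (j : Fin (n + 1)) :
    EqOn (fun x => (f j).eval x * (g j).eval x) (fun x => realize n f x * realize n g x)
      (Ioo (knot n j) (knot n (j + 1))) := fun x hx => by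
  simp only [realize_eq_eval_of_mem_Ioo _ hx]

theorem intervalIntegrable_realize_mul_realize (f g : PiecewisePoly n) {j : ℕ} (hj : j < n + 1) :
    IntervalIntegrable (fun x => realize n f x * realize n g x) volume
      (knot n j) (knot n (j + 1)) := by
  rw [intervalIntegrable_iff_integrableOn_Ioo_of_le (knot_lt_knot_succ n j).le]
  refine IntegrableOn.congr_fun ?_ (eqOn_realize_mul_realize f g ⟨j, hj⟩) measurableSet_Ioo
  rw [← intervalIntegrable_iff_integrableOn_Ioo_of_le (knot_lt_knot_succ n j).le]
  exact intervalIntegrable_eval_mul_eval _ _ _ _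

theorem integrable_realize_mul_realize (f g : PiecewisePoly n) :
    IntegrableOn (fun x => realize n f x * realize n g x) (Ioo (0 : ℝ) 1) := by
  have hpieces := IntervalIntegrable.trans_iterate (a := knot n) (n := n + 1)
    fun _ hj => intervalIntegrable_realize_mul_realize f g hj
  rwa [knot_zero, knot_last, intervalIntegrable_iff_integrableOn_Ioo_of_le zero_le_one] at hpieces

theorem ip0_realize (f g : PiecewisePoly n) :
    ip0 (realize n f) (realize n g) = inner ℝ f g := by
  have hsum := intervalIntegral.sum_integral_adjacent_intervals (a := knot n) (n := n + 1)
    fun _ hj => intervalIntegrable_realize_mul_realize f g hj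
  rw [knot_zero, knot_last] at hsum
  rw [ip0, ← integral_Ioc_eq_integral_Ioo, ← intervalIntegral.integral_of_le zero_le_one, ← hsum,
    inner_eq_sum_integral, Finset.sum_range]
  refine Finset.sum_congr rfl fun j _ => ?_
  rw [intervalIntegral.integral_of_le (knot_lt_knot_succ n j).le,
    intervalIntegral.integral_of_le (knot_lt_knot_succ n j).le,
    integral_Ioc_eq_integral_Ioo, integral_Ioc_eq_integral_Ioo]
  exact (setIntegral_congr_fun measurableSet_Ioo (eqOn_realize_mul_realize f g j)).symm

theorem isSpline0_realize (hp : 1 ≤ p) {f : PiecewisePoly n} (hf : f ∈ reducedSplines n p) :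
    IsSpline0 (n + 1) p (realize n f) :=
  ⟨isSpline_realize hp (reducedSplines_le_fullSplines hf), (mem_reducedSplines_iff.mp hf).2⟩

theorem exists_reducedSplines_realize_eq {u : ℝ → ℝ} (hu : IsSpline0 (n + 1) p u) :
    ∃ f ∈ reducedSplines n p, realize n f = u := by
  obtain ⟨f, hf, rfl⟩ := exists_fullSplines_realize_eq hu.1
  exact ⟨f, mem_reducedSplines_iff.mpr ⟨hf, hu.2⟩, rfl⟩

theorem isSplineC_realize (hp : 1 ≤ p) {a : Bool} {f : PiecewisePoly n}
    (hf : f ∈ fullSplines n p ⊓ component n p a) : IsSplineC (n + 1) p a (realize n f) := by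
  cases a
  · exact isSpline0_realize hp hf.2
  · refine ⟨isSpline_realize hp hf.1, fun v hv => ?_⟩
    obtain ⟨g, hg, rfl⟩ := exists_reducedSplines_realize_eq hv
    rw [ip0_realize]
    exact Submodule.inner_left_of_mem_orthogonal hg hf.2

theorem exists_component_realize_eq (hp : 1 ≤ p) {a : Bool} {u : ℝ → ℝ}
    (hu : IsSplineC (n + 1) p a u) :
    ∃ f ∈ fullSplines n p ⊓ component n p a, realize n f = u := by
  cases a
  · obtain ⟨f, hf, rfl⟩ := exists_reducedSplines_realize_eq hu
    exact ⟨f, ⟨reducedSplines_le_fullSplines hf, hf⟩, rfl⟩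
  · obtain ⟨f, hf, rfl⟩ := exists_fullSplines_realize_eq hu.1
    refine ⟨f, ⟨hf, (Submodule.mem_orthogonal' _ _).mpr fun g hg => ?_⟩, rfl⟩
    rw [← ip0_realize]
    exact hu.2 _ (isSpline0_realize hp hg)

end UnitInterval

section SchurProducts

open Matrix

open scoped ComplexOrder in
theorem posSemidef_prod_and_prod_sub_prod {𝕜 ι κ : Type*} [RCLike 𝕜] [Finite ι]
    {A B : κ → Matrix ι ι 𝕜} (hA : ∀ j, (A j).PosSemidef) (hAB : ∀ j, (B j - A j).PosSemidef)
    (s : Finset κ) :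
    (of fun k l => ∏ j ∈ s, A j k l).PosSemidef ∧
      (of fun k l => ∏ j ∈ s, B j k l - ∏ j ∈ s, A j k l).PosSemidef := by
  classical
  induction s using Finset.induction_on with
  | empty =>
    refine ⟨?_, ?_⟩
    · convert posSemidef_vecMulVec_self_star (1 : ι → 𝕜)
      ext k l
      simp [vecMulVec_apply]
    · convert PosSemidef.zero
      ext k l
      simp
  | insert i s hi ih =>
    have hB : (B i).PosSemidef := by simpa using (hAB i).add (hA i)
    refine ⟨?_, ?_⟩
    · convert (hA i).hadamard ih.1
      ext k l
      simp [Finset.prod_insert hi]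
    · convert (hB.hadamard ih.2).add ((hAB i).hadamard ih.1)
      ext k l
      simp only [Finset.prod_insert hi, Matrix.add_apply, hadamard_apply, Matrix.sub_apply,
        of_apply]
      ring

variable {ι κ E G : Type*} [AddCommGroup E] [Module ℝ E]
  [NormedAddCommGroup G] [InnerProductSpace ℝ G]

theorem dotProduct_gram_mulVec_self [Fintype ι] (x : ι → ℝ) (v : ι → G) :
    x ⬝ᵥ gram ℝ v *ᵥ x = ‖∑ k, x k • v k‖ ^ 2 := by
  rw [← real_inner_self_eq_norm_sq, ← star_dotProduct_gram_mulVec, star_trivial]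

theorem posSemidef_smul_gram_sub_gram [Finite ι] {V : Submodule ℝ E} {K : ℝ}
    {L L' : E →ₗ[ℝ] G} (hL : ∀ f ∈ V, ‖L f‖ ^ 2 ≤ K * ‖L' f‖ ^ 2) {F : ι → E}
    (hF : ∀ k, F k ∈ V) :
    (K • gram ℝ (fun k => L' (F k)) - gram ℝ fun k => L (F k)).PosSemidef := by
  have := Fintype.ofFinite ι
  refine .of_dotProduct_mulVec_nonneg (((isHermitian_gram ℝ _).smul (.all K)).sub
    (isHermitian_gram ℝ _)) fun x => ?_
  have hmem : ∑ k, x k • F k ∈ V := sum_mem fun k _ => V.smul_mem _ (hF k)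
  have hle := hL _ hmem
  simp only [map_sum, map_smul] at hle
  rw [star_trivial, sub_mulVec, dotProduct_sub, smul_mulVec, dotProduct_smul,
    dotProduct_gram_mulVec_self, dotProduct_gram_mulVec_self, smul_eq_mul]
  exact sub_nonneg.mpr hle

/-- Bounds between one-dimensional operators tensorize, since entrywise multiplication of Gram
matrices preserves the Loewner order (Schur). -/
theorem sum_mul_prod_inner_le [Fintype ι] [Fintype κ] {V : Submodule ℝ E}
    {K : κ → ℝ} {L L' : κ → E →ₗ[ℝ] G} (hL : ∀ j, ∀ f ∈ V, ‖L j f‖ ^ 2 ≤ K j * ‖L' j f‖ ^ 2)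
    {F : ι → κ → E} (hF : ∀ k j, F k j ∈ V) (c : ι → ℝ) :
    ∑ k, ∑ l, c k * c l * ∏ j, inner ℝ (L j (F k j)) (L j (F l j)) ≤
      (∏ j, K j) * ∑ k, ∑ l, c k * c l * ∏ j, inner ℝ (L' j (F k j)) (L' j (F l j)) := by
  have hgram := (posSemidef_prod_and_prod_sub_prod
    (fun j => posSemidef_gram ℝ fun k => L j (F k j))
    (fun j => posSemidef_smul_gram_sub_gram (hL j) fun k => hF k j) Finset.univ).2
  have hform := hgram.dotProduct_mulVec_nonneg c
  refine sub_nonneg.mp (le_of_le_of_eq hform ?_)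
  simp only [dotProduct, mulVec, star_trivial, of_apply, Matrix.smul_apply, gram_apply, smul_eq_mul,
    Finset.prod_mul_distrib, Finset.mul_sum, ← Finset.sum_sub_distrib]
  refine Finset.sum_congr rfl fun k _ => Finset.sum_congr rfl fun l _ => ?_
  ring

end SchurProducts

section TensorSums

variable {d n : ℕ} {ι κ : Type*}

/-- The factors of the image of a tensor sum with factors `F` under `L₁ ⊗ ⋯ ⊗ L_d`. -/
def mapFactors (L : Fin d → Module.End ℝ (PiecewisePoly n)) (F : ι → Fin d → PiecewisePoly n) :
    ι → Fin d → PiecewisePoly n :=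
  fun k j => L j (F k j)

theorem mapFactors_one (F : ι → Fin d → PiecewisePoly n) : mapFactors 1 F = F :=
  rfl

variable [Fintype ι] [Fintype κ]

/-- The function `∑ₖ cₖ F_{k1} ⊗ ⋯ ⊗ F_{kd}` on `ℝᵈ`, with piecewise polynomial factors. -/
def tensorSum (c : ι → ℝ) (F : ι → Fin d → PiecewisePoly n) : (Fin d → ℝ) → ℝ :=
  fun x => ∑ k, c k * ∏ j, realize n (F k j) (x j)

theorem exists_tensorSum_eq_of_mem_span {P : Fin d → (ℝ → ℝ) → Prop}
    {V : Fin d → Submodule ℝ (PiecewisePoly n)}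
    (hP : ∀ j f, P j f → ∃ g ∈ V j, realize n g = f) {u : (Fin d → ℝ) → ℝ}
    (hu : u ∈ Submodule.span ℝ {u | ∃ f : Fin d → ℝ → ℝ, (∀ j, P j (f j)) ∧
      u = fun x => ∏ j, f j (x j)}) :
    ∃ (N : ℕ) (c : Fin N → ℝ) (F : Fin N → Fin d → PiecewisePoly n),
      (∀ k j, F k j ∈ V j) ∧ tensorSum c F = u := by
  obtain ⟨N, c, w, rfl⟩ := Submodule.mem_span_set'.mp hu
  choose f hf hw using fun k => (w k).2
  choose F hF hFf using fun k j => hP j (f k j) (hf k j)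
  refine ⟨N, c, F, hF, funext fun x => ?_⟩
  simp [tensorSum, hw, hFf]

theorem tensorSum_mem_span {P : Fin d → (ℝ → ℝ) → Prop} (c : ι → ℝ)
    {F : ι → Fin d → PiecewisePoly n} (hF : ∀ k j, P j (realize n (F k j))) :
    tensorSum c F ∈ Submodule.span ℝ {u | ∃ f : Fin d → ℝ → ℝ, (∀ j, P j (f j)) ∧
      u = fun x => ∏ j, f j (x j)} := by
  have hsum : tensorSum c F = ∑ k, c k • fun x : Fin d → ℝ => ∏ j, realize n (F k j) (x j) := by
    funext x
    simp [tensorSum]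
  rw [hsum]
  exact sum_mem fun k _ => Submodule.smul_mem _ _ (Submodule.subset_span ⟨_, hF k, rfl⟩)

theorem continuous_tensorSum (c : ι → ℝ) {F : ι → Fin d → PiecewisePoly n}
    (hF : ∀ k j, F k j ∈ continuousPieces n) : Continuous (tensorSum c F) :=
  continuous_finsetSum _ fun k _ => continuous_const.mul <| continuous_finsetProd _ fun j _ =>
    (continuous_realize (hF k j)).comp (continuous_apply j)

theorem restrict_volume_cube (d : ℕ) : volume.restrict (cube d) =
    Measure.pi fun _ : Fin d => volume.restrict (Ioo (0 : ℝ) 1) := by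
  rw [volume_pi, cube, Measure.restrict_pi_pi]

theorem tensorSum_mul_tensorSum (c : ι → ℝ) (e : κ → ℝ) (F : ι → Fin d → PiecewisePoly n)
    (G : κ → Fin d → PiecewisePoly n) (x : Fin d → ℝ) :
    tensorSum c F x * tensorSum e G x =
      ∑ k, ∑ l, c k * e l * ∏ j, realize n (F k j) (x j) * realize n (G l j) (x j) := by
  simp only [tensorSum, Finset.sum_mul_sum, Finset.prod_mul_distrib, mul_mul_mul_comm]

theorem integrable_prod_realize_mul_realize (f g : Fin d → PiecewisePoly n) :
    IntegrableOn (fun x => ∏ j, realize n (f j) (x j) * realize n (g j) (x j)) (cube d) := by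
  rw [IntegrableOn, restrict_volume_cube]
  exact Integrable.fintype_prod (f := fun j t => realize n (f j) t * realize n (g j) t)
    fun j => integrable_realize_mul_realize (f j) (g j)

theorem integrable_tensorSum_mul_tensorSum (c : ι → ℝ) (e : κ → ℝ)
    (F : ι → Fin d → PiecewisePoly n) (G : κ → Fin d → PiecewisePoly n) :
    IntegrableOn (fun x => tensorSum c F x * tensorSum e G x) (cube d) := by
  simp only [tensorSum_mul_tensorSum]
  exact integrable_finsetSum _ fun k _ => integrable_finsetSum _ fun l _ =>
    (integrable_prod_realize_mul_realize (F k) (G l)).const_mul _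

theorem ipd_tensorSum (c : ι → ℝ) (e : κ → ℝ) (F : ι → Fin d → PiecewisePoly n)
    (G : κ → Fin d → PiecewisePoly n) :
    ipd d (tensorSum c F) (tensorSum e G) =
      ∑ k, ∑ l, c k * e l * ∏ j, inner ℝ (F k j) (G l j) := by
  have hprod : ∀ k l, IntegrableOn (fun x => c k * e l *
      ∏ j, realize n (F k j) (x j) * realize n (G l j) (x j)) (cube d) := fun k l =>
    (integrable_prod_realize_mul_realize (F k) (G l)).const_mul _
  simp only [ipd, tensorSum_mul_tensorSum]
  rw [integral_finsetSum _ fun k _ => integrable_finsetSum _ fun l _ => hprod k l]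
  refine Finset.sum_congr rfl fun k _ => ?_
  rw [integral_finsetSum _ fun l _ => hprod k l]
  refine Finset.sum_congr rfl fun l _ => ?_
  rw [integral_const_mul, restrict_volume_cube,
    integral_fintype_prod_eq_prod fun j t => realize n (F k j) t * realize n (G l j) t]
  simp only [← ip0_realize, ip0]

theorem l2normSqD_eq_ipd (u : (Fin d → ℝ) → ℝ) : l2normSqD d u = ipd d u u := by
  simp only [l2normSqD, ipd, sq]

theorem l2normSqD_nonneg (u : (Fin d → ℝ) → ℝ) : 0 ≤ l2normSqD d u :=
  integral_nonneg fun _ => sq_nonneg _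

theorem integrable_tensorSum_sq (c : ι → ℝ) (F : ι → Fin d → PiecewisePoly n) :
    IntegrableOn (fun x => tensorSum c F x ^ 2) (cube d) := by
  simpa only [sq] using integrable_tensorSum_mul_tensorSum c c F F

theorem l2normSqD_tensorSum_mapFactors_le {V : Submodule ℝ (PiecewisePoly n)} {K : Fin d → ℝ}
    {L L' : Fin d → Module.End ℝ (PiecewisePoly n)}
    (hL : ∀ j, ∀ f ∈ V, ‖L j f‖ ^ 2 ≤ K j * ‖L' j f‖ ^ 2) (c : ι → ℝ)
    {F : ι → Fin d → PiecewisePoly n} (hF : ∀ k j, F k j ∈ V) :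
    l2normSqD d (tensorSum c (mapFactors L F)) ≤
      (∏ j, K j) * l2normSqD d (tensorSum c (mapFactors L' F)) := by
  simp only [l2normSqD_eq_ipd, ipd_tensorSum, mapFactors]
  exact sum_mul_prod_inner_le hL hF c

end TensorSums

section PartialDerivatives

variable {d n : ℕ} {ι : Type*} [Fintype ι]

theorem ae_eq_pd_tensorSum (c : ι → ℝ) (F : ι → Fin d → PiecewisePoly n) (i : Fin d) :
    pd d i (tensorSum c F) =ᵐ[volume.restrict (cube d)]
      tensorSum c (mapFactors (Pi.mulSingle i (pieceDeriv n)) F) := by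
  rw [restrict_volume_cube]
  filter_upwards [Measure.tendsto_eval_ae_ae.eventually (ae_hasDerivAt_realize n)] with x hx
  have hline : (fun t => tensorSum c F (Function.update x i t)) = fun t => ∑ k, c k *
      (realize n (F k i) t * ∏ j ∈ Finset.univ.erase i, realize n (F k j) (x j)) := by
    funext t
    refine Finset.sum_congr rfl fun k _ => congrArg _ ?_
    rw [← Finset.mul_prod_erase _ _ (Finset.mem_univ i), Function.update_self]
    refine congrArg _ (Finset.prod_congr rfl fun j hj => ?_)
    rw [Function.update_of_ne (Finset.ne_of_mem_erase hj)]
  have hderiv := HasDerivAt.fun_sum (u := Finset.univ) fun k _ => ((hx (F k i)).mul_const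
    (∏ j ∈ Finset.univ.erase i, realize n (F k j) (x j))).const_mul (c k)
  rw [pd, hline]
  refine hderiv.deriv.trans (Finset.sum_congr rfl fun k _ => congrArg _ ?_)
  rw [← Finset.mul_prod_erase _ _ (Finset.mem_univ i), mapFactors, Pi.mulSingle_eq_same]
  refine congrArg _ (Finset.prod_congr rfl fun j hj => ?_)
  rw [mapFactors, Pi.mulSingle_eq_of_ne (Finset.ne_of_mem_erase hj), Module.End.one_apply]

theorem h1semiSqD_tensorSum (c : ι → ℝ) (F : ι → Fin d → PiecewisePoly n) :
    h1semiSqD d (tensorSum c F) =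
      ∑ i, l2normSqD d (tensorSum c (mapFactors (Pi.mulSingle i (pieceDeriv n)) F)) := by
  have hpd : ∀ᵐ x ∂volume.restrict (cube d), ∀ i, pd d i (tensorSum c F) x =
      tensorSum c (mapFactors (Pi.mulSingle i (pieceDeriv n)) F) x :=
    ae_all_iff.mpr fun i => ae_eq_pd_tensorSum c F i
  unfold h1semiSqD l2normSqD
  rw [← integral_finsetSum _ fun i _ => integrable_tensorSum_sq c _]
  refine integral_congr_ae ?_
  filter_upwards [hpd] with x hx
  simp only [hx]

end PartialDerivatives

section TensorSplitting

variable {d n p : ℕ} {ι κ : Type*} [Fintype ι] [Fintype κ]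

/-- The tensor product projector `Q_α = Q_{α₁} ⊗ ⋯ ⊗ Q_{α_d}`, applied to a tensor sum. -/
def tensorProj (p : ℕ) (α : Fin d → Bool) (c : ι → ℝ) (F : ι → Fin d → PiecewisePoly n) :
    (Fin d → ℝ) → ℝ :=
  tensorSum c (mapFactors (fun j => componentProj n p (α j)) F)

theorem l2normSqD_tensorProj_le (α : Fin d → Bool) (c : ι → ℝ)
    (F : ι → Fin d → PiecewisePoly n) :
    l2normSqD d (tensorProj p α c F) ≤ l2normSqD d (tensorSum c F) := by
  have hle := l2normSqD_tensorSum_mapFactors_le (V := ⊤) (K := 1) (L' := 1)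
    (L := fun j => componentProj n p (α j))
    (fun j f _ => by
      simpa using pow_le_pow_left₀ (norm_nonneg _) (norm_componentProj_le (α j) f) 2)
    c (F := F) fun _ _ => Submodule.mem_top
  simpa only [Pi.one_apply, Finset.prod_const_one, one_mul, mapFactors_one, tensorProj] using hle

theorem norm_mulSingle_pieceDeriv_componentProj_sq_le (hp : 1 ≤ p) (α : Fin d → Bool)
    (i j : Fin d) {f : PiecewisePoly n} (hf : f ∈ continuousPieces n) :
    ‖(Pi.mulSingle i (pieceDeriv n) : Fin d → Module.End ℝ _) j (componentProj n p (α j) f)‖ ^ 2 ≤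
      (Pi.mulSingle i 36 : Fin d → ℝ) j *
        ‖(Pi.mulSingle i (pieceDeriv n) : Fin d → Module.End ℝ _) j f‖ ^ 2 := by
  rcases eq_or_ne j i with rfl | hji
  · simp only [Pi.mulSingle_eq_same]
    calc _ ≤ (6 * ‖pieceDeriv n f‖) ^ 2 := by
          gcongr
          exact norm_pieceDeriv_componentProj_le hp (α j) hf
      _ = 36 * ‖pieceDeriv n f‖ ^ 2 := by ring
  · simp only [Pi.mulSingle_eq_of_ne hji, Module.End.one_apply, one_mul]
    gcongr
    exact norm_componentProj_le (α j) f

theorem h1semiSqD_tensorProj_le (hp : 1 ≤ p) (α : Fin d → Bool) (c : ι → ℝ)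
    {F : ι → Fin d → PiecewisePoly n} (hF : ∀ k j, F k j ∈ continuousPieces n) :
    h1semiSqD d (tensorProj p α c F) ≤ 36 * h1semiSqD d (tensorSum c F) := by
  rw [tensorProj, h1semiSqD_tensorSum, h1semiSqD_tensorSum, Finset.mul_sum]
  refine Finset.sum_le_sum fun i _ => ?_
  have hle := l2normSqD_tensorSum_mapFactors_le
    (L := fun j => (Pi.mulSingle i (pieceDeriv n) : Fin d → Module.End ℝ _) j *
      componentProj n p (α j))
    (fun j f hf => norm_mulSingle_pieceDeriv_componentProj_sq_le hp α i j hf) c hF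
  rwa [Finset.prod_pi_mulSingle', if_pos (Finset.mem_univ i)] at hle

theorem sum_tensorSum_mapFactors_componentProj (L : Fin d → Module.End ℝ (PiecewisePoly n))
    (c : ι → ℝ) (F : ι → Fin d → PiecewisePoly n) (x : Fin d → ℝ) :
    ∑ α : Fin d → Bool,
      tensorSum c (mapFactors L (mapFactors (fun j => componentProj n p (α j)) F)) x =
        tensorSum c (mapFactors L F) x := by
  simp only [tensorSum, mapFactors]
  rw [Finset.sum_comm]
  refine Finset.sum_congr rfl fun k _ => ?_
  rw [← Finset.mul_sum,
    ← Fintype.prod_sum fun j a => realize n (L j (componentProj n p a (F k j))) (x j)]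
  refine congrArg _ (Finset.prod_congr rfl fun j _ => ?_)
  rw [← Finset.sum_apply, ← map_sum, ← map_sum, sum_componentProj]

theorem l2normSqD_tensorSum_mapFactors_le_sum (p : ℕ)
    (L : Fin d → Module.End ℝ (PiecewisePoly n)) (c : ι → ℝ) (F : ι → Fin d → PiecewisePoly n) :
    l2normSqD d (tensorSum c (mapFactors L F)) ≤ 2 ^ d * ∑ α : Fin d → Bool, l2normSqD d
      (tensorSum c (mapFactors L (mapFactors (fun j => componentProj n p (α j)) F))) := by
  unfold l2normSqD
  rw [← integral_finsetSum _ fun α _ => integrable_tensorSum_sq c _, ← integral_const_mul]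
  refine integral_mono (integrable_tensorSum_sq c _)
    ((integrable_finsetSum _ fun α _ => integrable_tensorSum_sq c _).const_mul _) fun x => ?_
  have hcauchy := sq_sum_le_card_mul_sum_sq (s := Finset.univ) (f := fun α : Fin d → Bool =>
    tensorSum c (mapFactors L (mapFactors (fun j => componentProj n p (α j)) F)) x)
  simpa [sum_tensorSum_mapFactors_componentProj] using hcauchy

theorem l2normSqD_tensorSum_le_sum_tensorProj (p : ℕ) (c : ι → ℝ)
    (F : ι → Fin d → PiecewisePoly n) :
    l2normSqD d (tensorSum c F) ≤ 2 ^ d * ∑ α, l2normSqD d (tensorProj p α c F) :=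
  l2normSqD_tensorSum_mapFactors_le_sum p 1 c F

theorem h1semiSqD_tensorSum_le_sum_tensorProj (p : ℕ) (c : ι → ℝ)
    (F : ι → Fin d → PiecewisePoly n) :
    h1semiSqD d (tensorSum c F) ≤ 2 ^ d * ∑ α, h1semiSqD d (tensorProj p α c F) := by
  simp only [tensorProj, h1semiSqD_tensorSum]
  rw [Finset.sum_comm, Finset.mul_sum]
  exact Finset.sum_le_sum fun i _ => l2normSqD_tensorSum_mapFactors_le_sum p _ c F

theorem tensorProj_mem (hp : 1 ≤ p) (α : Fin d → Bool) (c : ι → ℝ)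
    {F : ι → Fin d → PiecewisePoly n} (hF : ∀ k j, F k j ∈ fullSplines n p) :
    tensorProj p α c F ∈ TensorSplineSub d (n + 1) p α :=
  tensorSum_mem_span c fun k j =>
    isSplineC_realize hp ⟨componentProj_mem_fullSplines _ (hF k j), componentProj_mem _ _⟩

theorem ipd_tensorProj (α : Fin d → Bool) (c : ι → ℝ) (F : ι → Fin d → PiecewisePoly n)
    (e : κ → ℝ) {G : κ → Fin d → PiecewisePoly n} (hG : ∀ l j, G l j ∈ component n p (α j)) :
    ipd d (tensorProj p α c F) (tensorSum e G) = ipd d (tensorSum c F) (tensorSum e G) := by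
  simp only [tensorProj, ipd_tensorSum, mapFactors, inner_componentProj_eq _ (hG _ _)]

theorem isOpen_cube (d : ℕ) : IsOpen (cube d) :=
  isOpen_set_pi finite_univ fun _ _ => isOpen_Ioo

theorem eqOn_zero_of_ipd_self_eq_zero (c : ι → ℝ) {F : ι → Fin d → PiecewisePoly n}
    (hF : ∀ k j, F k j ∈ continuousPieces n)
    (hzero : ipd d (tensorSum c F) (tensorSum c F) = 0) : EqOn (tensorSum c F) 0 (cube d) := by
  rw [ipd, integral_eq_zero_iff_of_nonneg (fun _ => mul_self_nonneg _)
    (integrable_tensorSum_mul_tensorSum c c F F)] at hzero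
  have hae : tensorSum c F =ᵐ[volume.restrict (cube d)] 0 := by
    filter_upwards [hzero] with x hx using mul_self_eq_zero.mp hx
  exact Measure.eqOn_open_of_ae_eq hae (isOpen_cube d)
    (continuous_tensorSum c hF).continuousOn continuousOn_const

theorem exists_tensorSum_eq_of_mem_tensorSplineSub (hp : 1 ≤ p) {α : Fin d → Bool}
    {w : (Fin d → ℝ) → ℝ} (hw : w ∈ TensorSplineSub d (n + 1) p α) :
    ∃ (N : ℕ) (e : Fin N → ℝ) (G : Fin N → Fin d → PiecewisePoly n),
      (∀ l j, G l j ∈ fullSplines n p ⊓ component n p (α j)) ∧ tensorSum e G = w :=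
  exists_tensorSum_eq_of_mem_span (P := fun j => IsSplineC (n + 1) p (α j))
    (V := fun j => fullSplines n p ⊓ component n p (α j))
    (fun _ _ hf => exists_component_realize_eq hp hf) hw

theorem ipd_sub_left {u v w : (Fin d → ℝ) → ℝ} (hu : IntegrableOn (fun x => u x * w x) (cube d))
    (hv : IntegrableOn (fun x => v x * w x) (cube d)) :
    ipd d (u - v) w = ipd d u w - ipd d v w := by
  simp only [ipd, Pi.sub_apply, sub_mul]
  exact integral_sub hu hv

theorem ipd_tensorSum_sub_tensorProj_sub (α : Fin d → Bool) (c : ι → ℝ)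
    (F : ι → Fin d → PiecewisePoly n) (e : κ → ℝ) {G : κ → Fin d → PiecewisePoly n}
    (hG : ∀ l j, G l j ∈ component n p (α j)) :
    ipd d (tensorSum c F - tensorProj p α c F - tensorSum e G) (tensorSum e G) =
      -ipd d (tensorSum e G) (tensorSum e G) := by
  have hintF := integrable_tensorSum_mul_tensorSum c e F G
  have hintProj : IntegrableOn (fun x => tensorProj p α c F x * tensorSum e G x) (cube d) :=
    integrable_tensorSum_mul_tensorSum c e _ G
  have hintDiff : IntegrableOn (fun x => (tensorSum c F - tensorProj p α c F) x *
      tensorSum e G x) (cube d) := by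
    simp only [Pi.sub_apply, sub_mul]
    exact hintF.sub hintProj
  rw [ipd_sub_left hintDiff (integrable_tensorSum_mul_tensorSum e e G G),
    ipd_sub_left hintF hintProj, ipd_tensorProj α c F e hG, sub_self, zero_sub]

theorem eqOn_tensorProj (hp : 1 ≤ p) {α : Fin d → Bool} {c : ι → ℝ}
    {F : ι → Fin d → PiecewisePoly n} (hF : ∀ k j, F k j ∈ fullSplines n p)
    {v : (Fin d → ℝ) → ℝ} (hv : IsL2ProjSub d (n + 1) p α (tensorSum c F) v) :
    EqOn v (tensorProj p α c F) (cube d) := by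
  have hmem := sub_mem hv.1 (tensorProj_mem hp α c hF)
  have horth := hv.2 _ hmem
  obtain ⟨N, e, G, hG, hw⟩ := exists_tensorSum_eq_of_mem_tensorSplineSub hp hmem
  have hsplit : v = tensorProj p α c F + tensorSum e G := by rw [hw, add_sub_cancel]
  rw [← hw, hsplit, ← sub_sub, ipd_tensorSum_sub_tensorProj_sub α c F e fun l j => (hG l j).2,
    neg_eq_zero] at horth
  have hzero := eqOn_zero_of_ipd_self_eq_zero e
    (fun l j => fullSplines_le_continuousPieces hp (hG l j).1) horth
  intro x hx
  rw [hsplit, Pi.add_apply, hzero hx, Pi.zero_apply, add_zero]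

end TensorSplitting

section Restriction

variable {d : ℕ} {u v : (Fin d → ℝ) → ℝ}

theorem l2normSqD_congr (h : EqOn u v (cube d)) : l2normSqD d u = l2normSqD d v :=
  setIntegral_congr_fun (isOpen_cube d).measurableSet fun x hx => by simp only [h hx]

theorem h1semiSqD_congr (h : EqOn u v (cube d)) : h1semiSqD d u = h1semiSqD d v := by
  refine setIntegral_congr_fun (isOpen_cube d).measurableSet fun x hx =>
    Finset.sum_congr rfl fun i _ => congrArg (· ^ 2) (Filter.EventuallyEq.deriv_eq ?_)
  have hcont : ContinuousAt (fun t => Function.update x i t) (x i) := by fun_prop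
  have hnhds : cube d ∈ nhds (Function.update x i (x i)) := by
    rw [Function.update_eq_self]
    exact (isOpen_cube d).mem_nhds hx
  filter_upwards [hcont.preimage_mem_nhds hnhds] with t ht using h ht

end Restriction

section Stability

variable {d : ℕ}

theorem h1semiSqD_nonneg (u : (Fin d → ℝ) → ℝ) : 0 ≤ h1semiSqD d u :=
  integral_nonneg fun _ => Finset.sum_nonneg fun _ _ => sq_nonneg _

theorem h1normSqD_nonneg (u : (Fin d → ℝ) → ℝ) : 0 ≤ h1normSqD d u :=
  add_nonneg (l2normSqD_nonneg u) (h1semiSqD_nonneg u)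

theorem h1normSqD_congr {u v : (Fin d → ℝ) → ℝ} (h : EqOn u v (cube d)) :
    h1normSqD d u = h1normSqD d v :=
  congrArg₂ (· + ·) (l2normSqD_congr h) (h1semiSqD_congr h)

variable {n p : ℕ} {ι : Type*} [Fintype ι]

theorem h1normSqD_tensorProj_le (hp : 1 ≤ p) (α : Fin d → Bool) (c : ι → ℝ)
    {F : ι → Fin d → PiecewisePoly n} (hF : ∀ k j, F k j ∈ continuousPieces n) :
    h1normSqD d (tensorProj p α c F) ≤ 36 * h1normSqD d (tensorSum c F) := by
  unfold h1normSqD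
  linarith [l2normSqD_tensorProj_le (p := p) α c F, h1semiSqD_tensorProj_le hp α c hF,
    l2normSqD_nonneg (tensorSum c F)]

theorem h1normSqD_tensorSum_le_sum_tensorProj (p : ℕ) (c : ι → ℝ)
    (F : ι → Fin d → PiecewisePoly n) :
    h1normSqD d (tensorSum c F) ≤ 2 ^ d * ∑ α, h1normSqD d (tensorProj p α c F) := by
  unfold h1normSqD
  rw [Finset.sum_add_distrib, mul_add]
  exact add_le_add (l2normSqD_tensorSum_le_sum_tensorProj p c F)
    (h1semiSqD_tensorSum_le_sum_tensorProj p c F)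

theorem inv_mul_le_sum_and_sum_le_mul {K X : ℝ} {Y : (Fin d → Bool) → ℝ} (hK : 1 ≤ K)
    (hY : ∀ α, 0 ≤ Y α) (hlower : X ≤ 2 ^ d * ∑ α, Y α) (hupper : ∀ α, Y α ≤ K * X) :
    (K * 2 ^ d)⁻¹ * X ≤ ∑ α, Y α ∧ ∑ α, Y α ≤ K * 2 ^ d * X := by
  have hsum : 0 ≤ ∑ α, Y α := Finset.sum_nonneg fun α _ => hY α
  constructor
  · rw [inv_mul_le_iff₀ (by positivity)]
    calc X ≤ 1 * (2 ^ d * ∑ α, Y α) := by rwa [one_mul]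
      _ ≤ K * (2 ^ d * ∑ α, Y α) := by gcongr
      _ = K * 2 ^ d * ∑ α, Y α := by ring
  · calc ∑ α, Y α ≤ ∑ _α : Fin d → Bool, K * X := Finset.sum_le_sum fun α _ => hupper α
      _ = K * 2 ^ d * X := by
        rw [Finset.sum_const, Finset.card_univ, Fintype.card_fun, Fintype.card_bool,
          Fintype.card_fin, nsmul_eq_mul]
        push_cast
        ring

theorem stable_splitting_2d_general (d : ℕ) :
    ∃ c : ℝ, 0 < c ∧ ∀ m p : ℕ, 1 ≤ m → 1 ≤ p →
      ∀ u : (Fin d → ℝ) → ℝ, u ∈ TensorSpline d m p →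
      ∀ v : (Fin d → Bool) → (Fin d → ℝ) → ℝ,
        (∀ α, IsL2ProjSub d m p α u (v α)) →
        (c⁻¹ * h1semiSqD d u ≤ ∑ α : Fin d → Bool, h1semiSqD d (v α) ∧
          ∑ α : Fin d → Bool, h1semiSqD d (v α) ≤ c * h1semiSqD d u) ∧
        (c⁻¹ * h1normSqD d u ≤ ∑ α : Fin d → Bool, h1normSqD d (v α) ∧
          ∑ α : Fin d → Bool, h1normSqD d (v α) ≤ c * h1normSqD d u) := by
  refine ⟨36 * 2 ^ d, by positivity, fun m p hm hp u hu v hv => ?_⟩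
  obtain ⟨n, rfl⟩ := Nat.exists_eq_add_of_le' hm
  obtain ⟨N, c, F, hF, rfl⟩ := exists_tensorSum_eq_of_mem_span (V := fun _ => fullSplines n p)
    (fun _ _ hf => exists_fullSplines_realize_eq hf) hu
  have hcont : ∀ k j, F k j ∈ continuousPieces n := fun k j =>
    fullSplines_le_continuousPieces hp (hF k j)
  have hproj : ∀ α, EqOn (v α) (tensorProj p α c F) (cube d) := fun α =>
    eqOn_tensorProj hp hF (hv α)
  simp only [fun α => h1semiSqD_congr (hproj α), fun α => h1normSqD_congr (hproj α)]
  exact ⟨inv_mul_le_sum_and_sum_le_mul (by norm_num) (fun α => h1semiSqD_nonneg _)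
      (h1semiSqD_tensorSum_le_sum_tensorProj p c F) fun α => h1semiSqD_tensorProj_le hp α c hcont,
    inv_mul_le_sum_and_sum_le_mul (by norm_num) (fun α => h1normSqD_nonneg _)
      (h1normSqD_tensorSum_le_sum_tensorProj p c F) fun α => h1normSqD_tensorProj_le hp α c hcont⟩

end Stability

/-- Theorem `thm:stable-2d`: the `L²`-orthogonal splitting
`S² = S₀₀ ⊕ S₀₁ ⊕ S₁₀ ⊕ S₁₁` is `H¹`-stable uniformly in `h` and `p`: there is a
constant `c > 0` independent of `h = 1/m` and `p` such that for every tensor product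
spline `u ∈ S²` (with `Q_α u` the `L²(Ω)`-orthogonal projections onto `S_α`):
`c⁻¹|u|₁² ≤ Σ_α |Q_α u|₁² ≤ c|u|₁²`, and the same for the full `H¹` norm. -/
theorem stable_splitting_2d :
    ∃ c : ℝ, 0 < c ∧ ∀ m p : ℕ, 1 ≤ m → 1 ≤ p →
      ∀ u : (Fin 2 → ℝ) → ℝ, u ∈ TensorSpline 2 m p →
      ∀ v : (Fin 2 → Bool) → (Fin 2 → ℝ) → ℝ,
        (∀ α, IsL2ProjSub 2 m p α u (v α)) →
        (c⁻¹ * h1semiSqD 2 u ≤ ∑ α : Fin 2 → Bool, h1semiSqD 2 (v α) ∧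
          ∑ α : Fin 2 → Bool, h1semiSqD 2 (v α) ≤ c * h1semiSqD 2 u) ∧
        (c⁻¹ * h1normSqD 2 u ≤ ∑ α : Fin 2 → Bool, h1normSqD 2 (v α) ∧
          ∑ α : Fin 2 → Bool, h1normSqD 2 (v α) ≤ c * h1normSqD 2 u) := by
  exact stable_splitting_2d_general 2

end SplineMG
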